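/- arXiv:1605.09569 — 7 statements merged into one kernel-verified Lean document; each statement's English description precedes it below -/
import Mathlib

section
/- Let j ≥ 1 be an integer. Suppose u : ℝ² → ℝ is continuous on the closed half-plane {(x₁,x₂) : x₁ ≥ 0}, harmonic on ℝ²_+ (i.e. twice continuously differentiable with vanishing Laplacian there), positively homogeneous of degree j (u(λx) = λ^j u(x) for all λ > 0 and all x with x₁ ≥ 0), and u(0, x₂) = 0 for all x₂ ∈ ℝ. Then there exists a constant c ∈ ℝ such that u(x) = c ψ_j(x) for every x with x₁ ≥ 0. -/
/-- `ψ_j(x₁,x₂) = Im(i^j (x₁ - i x₂)^j)`. -/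
noncomputable def psi (j : ℕ) (x : ℝ × ℝ) : ℝ :=
  (Complex.I ^ j * ((x.1 : ℂ) - Complex.I * (x.2 : ℂ)) ^ j).im

open Set

/-- Euler's identity for a function homogeneous of degree `j` on the open half-plane. -/
theorem fderiv_apply_self_of_homogeneous_halfplane {j : ℕ} {u : ℝ × ℝ → ℝ}
    (hhom : ∀ l : ℝ, 0 < l → ∀ x : ℝ × ℝ, 0 ≤ x.1 → u (l • x) = l ^ j * u x)
    {x : ℝ × ℝ} (hx : 0 < x.1) (hd : DifferentiableAt ℝ u x) :
    fderiv ℝ u x x = j * u x := by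
  have hline : HasDerivAt (fun l : ℝ => l • x) x 1 := by
    simpa using (hasDerivAt_id (1 : ℝ)).smul_const x
  have hd' : HasFDerivAt u (fderiv ℝ u x) ((1 : ℝ) • x) := by simpa using hd.hasFDerivAt
  have hcomp : HasDerivAt (fun l : ℝ => u (l • x)) (fderiv ℝ u x x) 1 :=
    hd'.comp_hasDerivAt (1 : ℝ) hline
  have hpow : HasDerivAt (fun l : ℝ => l ^ j * u x) (j * u x) 1 := by
    simpa using (hasDerivAt_pow j (1 : ℝ)).mul_const (u x)
  refine hcomp.unique (hpow.congr_of_eventuallyEq ?_)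
  filter_upwards [lt_mem_nhds (zero_lt_one' ℝ)] with l hl
  exact hhom l hl x hx.le

/-- Second-order Euler identity for a function homogeneous of degree `j` on the open half-plane. -/
theorem fderiv_fderiv_apply_self_of_homogeneous_halfplane {j : ℕ} {u : ℝ × ℝ → ℝ}
    (hC2 : ContDiffOn ℝ 2 u {x : ℝ × ℝ | 0 < x.1})
    (hhom : ∀ l : ℝ, 0 < l → ∀ x : ℝ × ℝ, 0 ≤ x.1 → u (l • x) = l ^ j * u x)
    {x : ℝ × ℝ} (hx : 0 < x.1) :
    fderiv ℝ (fderiv ℝ u) x x x = j * (j - 1) * u x := by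
  have hopen : IsOpen {x : ℝ × ℝ | 0 < x.1} := isOpen_lt continuous_const continuous_fst
  have hat : ∀ y : ℝ × ℝ, 0 < y.1 → ContDiffAt ℝ 2 u y := fun y hy =>
    hC2.contDiffAt (hopen.mem_nhds hy)
  have hdiff : ∀ y : ℝ × ℝ, 0 < y.1 → DifferentiableAt ℝ u y := fun y hy =>
    (hat y hy).differentiableAt (by norm_num)
  have hD : DifferentiableAt ℝ (fderiv ℝ u) x :=
    ((hat x hx).fderiv_right (m := 1) (by norm_num)).differentiableAt (by norm_num)
  have hleft := hD.hasFDerivAt.clm_apply (hasFDerivAt_id x)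
  have hright := (hdiff x hx).hasFDerivAt.const_mul (j : ℝ)
  have heq := hleft.unique (hright.congr_of_eventuallyEq (by
    filter_upwards [hopen.mem_nhds hx] with y hy
    exact fderiv_apply_self_of_homogeneous_halfplane hhom hy (hdiff y hy)))
  have happ := DFunLike.congr_fun heq x
  simp at happ
  rw [fderiv_apply_self_of_homogeneous_halfplane hhom hx (hdiff x hx)] at happ
  linear_combination happ

/-- The trace of a bilinear form on `ℝ × ℝ` can be computed in any orthonormal basis. -/
theorem clm_apply_add_apply_rotated (B : ℝ × ℝ →L[ℝ] ℝ × ℝ →L[ℝ] ℝ)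
    {a b : ℝ} (hab : a ^ 2 + b ^ 2 = 1) :
    B (a, b) (a, b) + B (b, -a) (b, -a) = B (1, 0) (1, 0) + B (0, 1) (0, 1) := by
  have hdecomp : ∀ p q : ℝ, ((p, q) : ℝ × ℝ) = p • (1, 0) + q • (0, 1) := by
    intro p q; simp
  rw [hdecomp a b, hdecomp b (-a)]
  simp only [map_add, map_smul, add_apply, smul_apply, smul_eq_mul]
  linear_combination (B (1, 0) (1, 0) + B (0, 1) (0, 1)) * hab

/-- A function whose second derivative is `-k²` times itself on an open interval is a
combination of `cos (k s)` and `sin (k s)`. -/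
theorem exists_eq_cos_add_sin_of_hasDerivAt {k a b : ℝ} (hk : k ≠ 0) {f f' : ℝ → ℝ}
    (hf : ∀ s ∈ Ioo a b, HasDerivAt f (f' s) s)
    (hf' : ∀ s ∈ Ioo a b, HasDerivAt f' (-k ^ 2 * f s) s) :
    ∃ A B : ℝ, ∀ s ∈ Ioo a b, f s = A * Real.cos (k * s) + B * Real.sin (k * s) := by
  have hcos : ∀ s : ℝ, HasDerivAt (fun s => Real.cos (k * s)) (-Real.sin (k * s) * k) s :=
    fun s => by simpa using ((hasDerivAt_id s).const_mul k).cos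
  have hsin : ∀ s : ℝ, HasDerivAt (fun s => Real.sin (k * s)) (Real.cos (k * s) * k) s :=
    fun s => by simpa using ((hasDerivAt_id s).const_mul k).sin
  have hconst : ∀ g : ℝ → ℝ, (∀ s ∈ Ioo a b, HasDerivAt g 0 s) →
      ∃ C, ∀ s ∈ Ioo a b, g s = C := fun g hg =>
    isOpen_Ioo.exists_is_const_of_deriv_eq_zero isPreconnected_Ioo
      (fun s hs => (hg s hs).differentiableAt.differentiableWithinAt)
      (fun s hs => (hg s hs).deriv)
  obtain ⟨A, hA⟩ := hconst
    (fun s => f s * Real.cos (k * s) - f' s * Real.sin (k * s) / k) fun s hs => by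
      refine (((hf s hs).mul (hcos s)).sub (((hf' s hs).mul (hsin s)).div_const k)).congr_deriv ?_
      field_simp
      ring
  obtain ⟨B, hB⟩ := hconst
    (fun s => f s * Real.sin (k * s) + f' s * Real.cos (k * s) / k) fun s hs => by
      refine (((hf s hs).mul (hsin s)).add (((hf' s hs).mul (hcos s)).div_const k)).congr_deriv ?_
      field_simp
      ring
  refine ⟨A, B, fun s hs => ?_⟩
  rw [← hA s hs, ← hB s hs]
  linear_combination -f s * Real.sin_sq_add_cos_sq (k * s)

/-- `ψ_j` on the circle, in terms of the angle measured from the positive `x₂`-axis. -/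
theorem psi_sin_cos (j : ℕ) (r s : ℝ) :
    psi j (r * Real.sin s, r * Real.cos s) = r ^ j * Real.sin (j * s) := by
  have hbase : Complex.I * (((r * Real.sin s : ℝ) : ℂ) - Complex.I * ((r * Real.cos s : ℝ) : ℂ))
      = r * (Complex.cos s + Complex.sin s * Complex.I) := by
    push_cast
    linear_combination (-(r : ℂ) * Complex.cos s) * Complex.I_mul_I
  rw [psi, ← mul_pow, hbase, mul_pow, Complex.cos_add_sin_mul_I_pow]
  have hreal : (r : ℂ) ^ j * (Complex.cos (j * s) + Complex.sin (j * s) * Complex.I)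
      = ((r ^ j * Real.cos (j * s) : ℝ) : ℂ) + ((r ^ j * Real.sin (j * s) : ℝ) : ℂ) * Complex.I := by
    push_cast
    ring
  rw [hreal, Complex.add_im, Complex.ofReal_im, Complex.im_ofReal_mul, Complex.I_im]
  ring

/-- Any function continuous on the closed half-plane, harmonic on the open half-plane,
positively homogeneous of degree `j` and vanishing on the boundary is a multiple of `ψ_j`. -/
theorem homogeneous_harmonic_halfplane_eq_mul_psi (j : ℕ) (hj : 1 ≤ j) (u : ℝ × ℝ → ℝ)
    (hcont : ContinuousOn u {x : ℝ × ℝ | 0 ≤ x.1})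
    (hC2 : ContDiffOn ℝ 2 u {x : ℝ × ℝ | 0 < x.1})
    (hharm : ∀ x ∈ {x : ℝ × ℝ | 0 < x.1},
      fderiv ℝ (fun y => fderiv ℝ u y (1, 0)) x (1, 0)
        + fderiv ℝ (fun y => fderiv ℝ u y (0, 1)) x (0, 1) = 0)
    (hhom : ∀ l : ℝ, 0 < l → ∀ x : ℝ × ℝ, 0 ≤ x.1 → u (l • x) = l ^ j * u x)
    (hbdry : ∀ x₂ : ℝ, u (0, x₂) = 0) :
    ∃ c : ℝ, ∀ x : ℝ × ℝ, 0 ≤ x.1 → u x = c * psi j x := by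
  have hopen : IsOpen {x : ℝ × ℝ | 0 < x.1} := isOpen_lt continuous_const continuous_fst
  have hat : ∀ y : ℝ × ℝ, 0 < y.1 → ContDiffAt ℝ 2 u y := fun y hy =>
    hC2.contDiffAt (hopen.mem_nhds hy)
  have hdiff : ∀ y : ℝ × ℝ, 0 < y.1 → DifferentiableAt ℝ u y := fun y hy =>
    (hat y hy).differentiableAt (by norm_num)
  have hD : ∀ y : ℝ × ℝ, 0 < y.1 → DifferentiableAt ℝ (fderiv ℝ u) y := fun y hy =>
    ((hat y hy).fderiv_right (m := 1) (by norm_num)).differentiableAt (by norm_num)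
  have hlap : ∀ y : ℝ × ℝ, 0 < y.1 →
      fderiv ℝ (fderiv ℝ u) y (1, 0) (1, 0) + fderiv ℝ (fderiv ℝ u) y (0, 1) (0, 1) = 0 := by
    intro y hy
    have happ : ∀ v : ℝ × ℝ,
        fderiv ℝ (fun z => fderiv ℝ u z v) y v = fderiv ℝ (fderiv ℝ u) y v v := fun v => by
      rw [fderiv_clm_apply (hD y hy) (differentiableAt_const v)]
      simp
    rw [← happ, ← happ]
    exact hharm y hy
  have hγ : ∀ s : ℝ, HasDerivAt (fun s => (Real.sin s, Real.cos s))
      (Real.cos s, -Real.sin s) s := fun s =>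
    (Real.hasDerivAt_sin s).prodMk (Real.hasDerivAt_cos s)
  have hτ : ∀ s : ℝ, HasDerivAt (fun s => (Real.cos s, -Real.sin s))
      (-Real.sin s, -Real.cos s) s := fun s =>
    (Real.hasDerivAt_cos s).prodMk (Real.hasDerivAt_sin s).neg
  have hpos : ∀ s ∈ Ioo 0 Real.pi, 0 < Real.sin s := fun s hs => Real.sin_pos_of_mem_Ioo hs
  have hj0 : (j : ℝ) ≠ 0 := by positivity
  obtain ⟨A, B, hAB⟩ := exists_eq_cos_add_sin_of_hasDerivAt (a := 0) (b := Real.pi) hj0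
    (f := fun s => u (Real.sin s, Real.cos s))
    (f' := fun s => fderiv ℝ u (Real.sin s, Real.cos s) (Real.cos s, -Real.sin s))
    (fun s hs => ((hdiff (Real.sin s, Real.cos s) (hpos s hs)).hasFDerivAt.comp_hasDerivAt s
      (hγ s)))
    (fun s hs => by
      set x : ℝ × ℝ := (Real.sin s, Real.cos s) with hx
      have hx1 : 0 < x.1 := hpos s hs
      have hDγ := (hD x hx1).hasFDerivAt.comp_hasDerivAt s (hγ s)
      refine (hDγ.clm_apply (hτ s)).congr_deriv ?_
      have htrace := clm_apply_add_apply_rotated (fderiv ℝ (fderiv ℝ u) x)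
        (Real.sin_sq_add_cos_sq s)
      have hneg : ((-Real.sin s, -Real.cos s) : ℝ × ℝ) = -x := rfl
      rw [hlap x hx1, ← hx,
        fderiv_fderiv_apply_self_of_homogeneous_halfplane hC2 hhom hx1] at htrace
      simp only [Function.comp_apply, ← hx]
      rw [hneg, map_neg,
        fderiv_apply_self_of_homogeneous_halfplane hhom hx1 (hdiff x hx1)]
      linear_combination htrace)
  have hA : A = 0 := by
    have hsub : Ioo 0 Real.pi ⊆ Icc 0 Real.pi := Ioo_subset_Icc_self
    have hfc : ContinuousOn (fun s => u (Real.sin s, Real.cos s)) (Icc 0 Real.pi) :=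
      hcont.comp (by fun_prop) fun s hs => Real.sin_nonneg_of_mem_Icc hs
    have hg : Continuous fun s : ℝ => A * Real.cos (j * s) + B * Real.sin (j * s) := by fun_prop
    have hcl : Icc 0 Real.pi ⊆ closure (Ioo 0 Real.pi) := by
      rw [closure_Ioo Real.pi_pos.ne]
    have h0 := EqOn.of_subset_closure hAB hfc hg.continuousOn hsub hcl
      (left_mem_Icc.2 Real.pi_pos.le)
    simpa [hbdry] using h0.symm
  refine ⟨B, fun x hx => ?_⟩
  rcases hx.eq_or_lt with h0 | hx1
  · have hx0 : x = (x.2 * Real.sin 0, x.2 * Real.cos 0) := by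
      ext <;> simp [← h0]
    rw [hx0, psi_sin_cos]
    simp [hbdry]
  · set z : ℂ := ⟨x.2, x.1⟩ with hz
    have hz0 : z ≠ 0 := fun h => hx1.ne' (congrArg Complex.im h)
    have hr : 0 < ‖z‖ := norm_pos_iff.2 hz0
    have hs : z.arg ∈ Ioo 0 Real.pi := by
      refine ⟨(Complex.arg_nonneg_iff.2 hx1.le).lt_of_ne fun h => ?_,
        (Complex.arg_le_pi z).lt_of_ne fun h => ?_⟩
      · exact hx1.ne (Complex.arg_eq_zero_iff.1 h.symm).2.symm
      · exact hx1.ne (Complex.arg_eq_pi_iff.1 h).2.symm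
    have hpolar : x = (‖z‖ * Real.sin z.arg, ‖z‖ * Real.cos z.arg) := by
      rw [Complex.norm_mul_sin_arg, Complex.norm_mul_cos_arg]
    have hu : u (‖z‖ * Real.sin z.arg, ‖z‖ * Real.cos z.arg)
        = ‖z‖ ^ j * u (Real.sin z.arg, Real.cos z.arg) :=
      hhom ‖z‖ hr (Real.sin z.arg, Real.cos z.arg) (hpos _ hs).le
    rw [hpolar, psi_sin_cos, hu, hAB _ hs, hA]
    ring
end

section
/- Let j ≥ 1 be an integer, 0 < r₁ < r₂, and let u be a complex-valued function which is twice continuously differentiable on an open subset of ℝ² containing the closed half-annulus K = {x = (x₁,x₂) : r₁ ≤ |x| ≤ r₂, x₁ ≥ 0}, with Δu = 0 on that open set, and u(0, x₂) = 0 whenever r₁ ≤ |x₂| ≤ r₂. Define ω(r) = ∫_{−π/2}^{π/2} u(r cos t, r sin t) sin(j(π/2 − t)) dt for r ∈ [r₁, r₂]. Then ω is twice continuously differentiable on (r₁, r₂) and satisfies ω''(r) + ω'(r)/r − (j²/r²) ω(r) = 0 there (equivalently (r^{1+2j}(r^{−j}ω(r))')' = 0). -/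
open MeasureTheory Set

/-- Differentiation under an interval integral whose integrand has a jointly continuous partial
derivative in the parameter. -/
theorem hasDerivAt_intervalIntegral_of_continuousOn {F F' : ℝ → ℝ → ℂ} {a b c d r : ℝ}
    (hab : a ≤ b) (hr : r ∈ Ioo c d)
    (hF : ContinuousOn (fun q : ℝ × ℝ => F q.1 q.2) (Icc c d ×ˢ Icc a b))
    (hF' : ContinuousOn (fun q : ℝ × ℝ => F' q.1 q.2) (Icc c d ×ˢ Icc a b))
    (hderiv : ∀ x ∈ Icc c d, ∀ t ∈ Icc a b, HasDerivAt (fun y => F y t) (F' x t) x) :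
    HasDerivAt (fun x => ∫ t in a..b, F x t) (∫ t in a..b, F' r t) r := by
  have slice : ∀ {G : ℝ → ℝ → ℂ},
      ContinuousOn (fun q : ℝ × ℝ => G q.1 q.2) (Icc c d ×ˢ Icc a b) →
      ∀ x ∈ Icc c d, IntervalIntegrable (G x) volume a b := by
    intro G hG x hx
    apply ContinuousOn.intervalIntegrable_of_Icc hab
    exact hG.comp (f := fun t : ℝ => (x, t)) (by fun_prop) fun t ht => ⟨hx, ht⟩
  obtain ⟨C, hC⟩ := (isCompact_Icc.prod isCompact_Icc).exists_bound_of_continuousOn hF'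
  have hIoc : Ioc a b ⊆ Icc a b := Ioc_subset_Icc_self
  refine (intervalIntegral.hasDerivAt_integral_of_dominated_loc_of_deriv_le (s := Ioo c d)
    (bound := fun _ => C) (isOpen_Ioo.mem_nhds hr) ?_ (slice hF r (Ioo_subset_Icc_self hr)) ?_ ?_
    intervalIntegrable_const ?_).2
  · filter_upwards [isOpen_Ioo.mem_nhds hr] with x hx
    exact (slice hF x (Ioo_subset_Icc_self hx)).aestronglyMeasurable_restrict_uIoc
  · exact (slice hF' r (Ioo_subset_Icc_self hr)).aestronglyMeasurable_restrict_uIoc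
  · refine ae_of_all _ fun t ht x hx => hC (x, t) ⟨Ioo_subset_Icc_self hx, ?_⟩
    rw [uIoc_of_le hab] at ht
    exact hIoc ht
  · refine ae_of_all _ fun t ht x hx => hderiv x (Ioo_subset_Icc_self hx) t ?_
    rw [uIoc_of_le hab] at ht
    exact hIoc ht

theorem hasDerivAt_polar_radius (r t : ℝ) :
    HasDerivAt (fun x : ℝ => (x * Real.cos t, x * Real.sin t)) (Real.cos t, Real.sin t) r := by
  simpa using ((hasDerivAt_id r).mul_const (Real.cos t)).prodMk
    ((hasDerivAt_id r).mul_const (Real.sin t))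

theorem hasDerivAt_polar_angle (r t : ℝ) :
    HasDerivAt (fun x : ℝ => (r * Real.cos x, r * Real.sin x))
      (r • (-Real.sin t, Real.cos t)) t := by
  simpa using ((Real.hasDerivAt_cos t).const_mul r).prodMk ((Real.hasDerivAt_sin t).const_mul r)

/-- The trace of a bilinear form on `ℝ × ℝ` can be computed in any rotated orthonormal frame. -/
theorem bilinear_trace_rotate (B : ℝ × ℝ →L[ℝ] ℝ × ℝ →L[ℝ] ℂ) (t : ℝ) :
    B (Real.cos t, Real.sin t) (Real.cos t, Real.sin t)
      + B (-Real.sin t, Real.cos t) (-Real.sin t, Real.cos t)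
      = B (1, 0) (1, 0) + B (0, 1) (0, 1) := by
  have key : ∀ a b : ℝ, B (a, b) (a, b) = (a : ℂ) ^ 2 * B (1, 0) (1, 0)
      + a * b * (B (1, 0) (0, 1) + B (0, 1) (1, 0)) + (b : ℂ) ^ 2 * B (0, 1) (0, 1) := by
    intro a b
    have h : ((a, b) : ℝ × ℝ) = a • (1, 0) + b • (0, 1) := by simp
    rw [h]
    simp only [map_add, map_smul, add_apply, smul_apply,
      Complex.real_smul]
    ring
  rw [key (Real.cos t), key (-Real.sin t)]
  have h : (Real.cos t : ℂ) ^ 2 + (Real.sin t : ℂ) ^ 2 = 1 := by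
    exact_mod_cast Real.cos_sq_add_sin_sq t
  push_cast at h ⊢
  linear_combination (B (1, 0) (1, 0) + B (0, 1) (0, 1)) * h

/-- The `j`-th Fourier sine coefficient `ω(r) = ∫_{-π/2}^{π/2} u(r cos t, r sin t)
sin(j(π/2 - t)) dt` of a harmonic function on a half-annulus of the half-plane,
vanishing on the flat part of the boundary, is `C²` and satisfies
`ω'' + ω'/r - (j²/r²) ω = 0`. -/
theorem fourier_coeff_ode (j : ℕ) (hj : 1 ≤ j) (r₁ r₂ : ℝ) (hr₁ : 0 < r₁) (hr₁₂ : r₁ < r₂)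
    (U : Set (ℝ × ℝ)) (hU : IsOpen U)
    (hKU : {x : ℝ × ℝ | r₁ ≤ Real.sqrt (x.1 ^ 2 + x.2 ^ 2)
        ∧ Real.sqrt (x.1 ^ 2 + x.2 ^ 2) ≤ r₂ ∧ 0 ≤ x.1} ⊆ U)
    (u : ℝ × ℝ → ℂ) (hu : ContDiffOn ℝ 2 u U)
    (hharm : ∀ x ∈ U,
      fderiv ℝ (fun y => fderiv ℝ u y (1, 0)) x (1, 0)
        + fderiv ℝ (fun y => fderiv ℝ u y (0, 1)) x (0, 1) = 0)
    (hbc : ∀ x₂ : ℝ, r₁ ≤ |x₂| → |x₂| ≤ r₂ → u (0, x₂) = 0)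
    (ω : ℝ → ℂ)
    (hω : ∀ r : ℝ, ω r = ∫ t in (-(Real.pi / 2))..(Real.pi / 2),
        u (r * Real.cos t, r * Real.sin t)
          * (Real.sin ((j : ℝ) * (Real.pi / 2 - t)) : ℂ)) :
    ContDiffOn ℝ 2 ω (Set.Ioo r₁ r₂) ∧
      ∀ r ∈ Set.Ioo r₁ r₂,
        deriv (deriv ω) r + deriv ω r / (r : ℂ)
          - (((j : ℝ) ^ 2 / r ^ 2 : ℝ) : ℂ) * ω r = 0 := by
  have hpi : -(Real.pi / 2) ≤ Real.pi / 2 := by linarith [Real.pi_pos]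
  set I : Set ℝ := Icc (-(Real.pi / 2)) (Real.pi / 2) with hI
  have hpU : ∀ r ∈ Icc r₁ r₂, ∀ t ∈ I, (r * Real.cos t, r * Real.sin t) ∈ U := by
    intro r hr t ht
    have hr0 : 0 ≤ r := hr₁.le.trans hr.1
    have hn : Real.sqrt ((r * Real.cos t) ^ 2 + (r * Real.sin t) ^ 2) = r := by
      rw [mul_pow, mul_pow, ← mul_add, Real.cos_sq_add_sin_sq, mul_one, Real.sqrt_sq hr0]
    refine hKU ⟨?_, ?_, mul_nonneg hr0 (Real.cos_nonneg_of_mem_Icc ht)⟩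
    · simpa only [hn] using hr.1
    · simpa only [hn] using hr.2
  have hDu : ContDiffOn ℝ 1 (fderiv ℝ u) U := hu.fderiv_of_isOpen hU (by norm_num)
  have hd1 : ∀ x ∈ U, HasFDerivAt u (fderiv ℝ u x) x := fun x hx =>
    ((hu.differentiableOn (by norm_num)).differentiableAt (hU.mem_nhds hx)).hasFDerivAt
  have hd2 : ∀ x ∈ U, HasFDerivAt (fderiv ℝ u) (fderiv ℝ (fderiv ℝ u) x) x := fun x hx =>
    ((hDu.differentiableOn (by norm_num)).differentiableAt (hU.mem_nhds hx)).hasFDerivAt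
  have hlap : ∀ x ∈ U, fderiv ℝ (fderiv ℝ u) x (1, 0) (1, 0)
      + fderiv ℝ (fderiv ℝ u) x (0, 1) (0, 1) = 0 := by
    intro x hx
    have h := hharm x hx
    rw [((hd2 x hx).clm_apply (hasFDerivAt_const ((1, 0) : ℝ × ℝ) x)).fderiv,
      ((hd2 x hx).clm_apply (hasFDerivAt_const ((0, 1) : ℝ × ℝ) x)).fderiv] at h
    simpa only [add_apply, ContinuousLinearMap.comp_apply, ContinuousLinearMap.flip_apply,
      zero_apply, map_zero, zero_add] using h
  let p : ℝ × ℝ → ℝ × ℝ := fun q => (q.1 * Real.cos q.2, q.1 * Real.sin q.2)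
  have hp : Continuous p := by fun_prop
  have hpm : MapsTo p (Icc r₁ r₂ ×ˢ I) U := fun q hq => hpU q.1 hq.1 q.2 hq.2
  let e : ℝ → ℝ × ℝ := fun t => (Real.cos t, Real.sin t)
  let n : ℝ → ℝ × ℝ := fun t => (-Real.sin t, Real.cos t)
  have he : Continuous e := by fun_prop
  let s : ℝ → ℂ := fun t => (Real.sin ((j : ℝ) * (Real.pi / 2 - t)) : ℂ)
  let s' : ℝ → ℂ := fun t => (-(j : ℝ) * Real.cos ((j : ℝ) * (Real.pi / 2 - t)) : ℝ)
  have hs : Continuous s := by fun_prop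
  let F₀ : ℝ → ℝ → ℂ := fun r t => u (p (r, t)) * s t
  let F₁ : ℝ → ℝ → ℂ := fun r t => fderiv ℝ u (p (r, t)) (e t) * s t
  let F₂ : ℝ → ℝ → ℂ := fun r t => fderiv ℝ (fderiv ℝ u) (p (r, t)) (e t) (e t) * s t
  have hc0 : ContinuousOn (fun q : ℝ × ℝ => F₀ q.1 q.2) (Icc r₁ r₂ ×ˢ I) :=
    (hu.continuousOn.comp hp.continuousOn hpm).mul (hs.comp continuous_snd).continuousOn
  have hc1 : ContinuousOn (fun q : ℝ × ℝ => F₁ q.1 q.2) (Icc r₁ r₂ ×ˢ I) :=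
    ((hDu.continuousOn.comp hp.continuousOn hpm).clm_apply
      (he.comp continuous_snd).continuousOn).mul (hs.comp continuous_snd).continuousOn
  have hc2 : ContinuousOn (fun q : ℝ × ℝ => F₂ q.1 q.2) (Icc r₁ r₂ ×ˢ I) :=
    ((((hDu.continuousOn_fderiv_of_isOpen hU le_rfl).comp hp.continuousOn hpm).clm_apply
      (he.comp continuous_snd).continuousOn).clm_apply
      (he.comp continuous_snd).continuousOn).mul (hs.comp continuous_snd).continuousOn
  have hF01 : ∀ x ∈ Icc r₁ r₂, ∀ t ∈ I, HasDerivAt (fun y => F₀ y t) (F₁ x t) x :=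
    fun x hx t ht => ((hd1 _ (hpU x hx t ht)).comp_hasDerivAt x
      (hasDerivAt_polar_radius x t)).mul_const _
  have hF12 : ∀ x ∈ Icc r₁ r₂, ∀ t ∈ I, HasDerivAt (fun y => F₁ y t) (F₂ x t) x := by
    intro x hx t ht
    have h : HasDerivAt (fun y => fderiv ℝ u (p (y, t)))
        (fderiv ℝ (fderiv ℝ u) (p (x, t)) (e t)) x :=
      (hd2 _ (hpU x hx t ht)).comp_hasDerivAt x (hasDerivAt_polar_radius x t)
    have h' := h.clm_apply (hasDerivAt_const x (e t))
    rw [map_zero, add_zero] at h'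
    exact h'.mul_const (s t)
  have hω0 : ω = fun r => ∫ t in (-(Real.pi / 2))..(Real.pi / 2), F₀ r t := funext hω
  have hω1 : ∀ r ∈ Ioo r₁ r₂,
      HasDerivAt ω (∫ t in (-(Real.pi / 2))..(Real.pi / 2), F₁ r t) r := fun r hr =>
    hω0 ▸ hasDerivAt_intervalIntegral_of_continuousOn hpi hr hc0 hc1 hF01
  have hω2 : ∀ r ∈ Ioo r₁ r₂,
      HasDerivAt (deriv ω) (∫ t in (-(Real.pi / 2))..(Real.pi / 2), F₂ r t) r := fun r hr =>
    (hasDerivAt_intervalIntegral_of_continuousOn hpi hr hc1 hc2 hF12).congr_of_eventuallyEq <| by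
      filter_upwards [isOpen_Ioo.mem_nhds hr] with x hx using (hω1 x hx).deriv
  have hs1 : ∀ t, HasDerivAt s (s' t) t := by
    intro t
    have h := ((((hasDerivAt_id t).const_sub (Real.pi / 2)).const_mul (j : ℝ)).sin).ofReal_comp
    refine h.congr_deriv ?_
    simp only [s', id]
    push_cast
    ring
  have hs2 : ∀ t, HasDerivAt s' (-(j : ℂ) ^ 2 * s t) t := by
    intro t
    have h := (((((hasDerivAt_id t).const_sub (Real.pi / 2)).const_mul (j : ℝ)).cos).const_mul
      (-(j : ℝ))).ofReal_comp
    refine h.congr_deriv ?_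
    simp only [s, id]
    push_cast
    ring
  have hode : ∀ r ∈ Ioo r₁ r₂,
      deriv (deriv ω) r + deriv ω r / (r : ℂ)
        - (((j : ℝ) ^ 2 / r ^ 2 : ℝ) : ℂ) * ω r = 0 := by
    intro r hr
    have hr' := Ioo_subset_Icc_self hr
    have hr0 : 0 < r := hr₁.trans hr.1
    have hrC : (r : ℂ) ≠ 0 := by exact_mod_cast hr0.ne'
    have slice : ∀ {G : ℝ → ℝ → ℂ},
        ContinuousOn (fun q : ℝ × ℝ => G q.1 q.2) (Icc r₁ r₂ ×ˢ I) →
        ContinuousOn (G r) I := fun {G} hG =>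
      hG.comp (f := fun t : ℝ => (r, t)) (by fun_prop) fun t ht => ⟨hr', ht⟩
    have hi0 := (slice hc0).intervalIntegrable_of_Icc (μ := volume) hpi
    have hi1 := (slice hc1).intervalIntegrable_of_Icc (μ := volume) hpi
    have hi2 := (slice hc2).intervalIntegrable_of_Icc (μ := volume) hpi
    -- Integration by parts in the angle: `W = u s' - u_t s` has `W' = -(u_tt + j² u) s`.
    let W : ℝ → ℂ := fun t => u (p (r, t)) * s' t - r * fderiv ℝ u (p (r, t)) (n t) * s t
    have hW : ∀ t ∈ I, HasDerivAt W
        ((r : ℂ) ^ 2 * F₂ r t + r * F₁ r t - (j : ℂ) ^ 2 * F₀ r t) t := by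
      intro t ht
      have hx := hpU r hr' t ht
      have hn : HasDerivAt n (-e t) t := by
        simpa [e] using (Real.hasDerivAt_sin t).neg.prodMk (Real.hasDerivAt_cos t)
      have h1 : HasDerivAt (fun y => u (p (r, y))) (fderiv ℝ u (p (r, t)) (r • n t)) t :=
        (hd1 _ hx).comp_hasDerivAt t (hasDerivAt_polar_angle r t)
      have h2 : HasDerivAt (fun y => fderiv ℝ u (p (r, y)))
          (fderiv ℝ (fderiv ℝ u) (p (r, t)) (r • n t)) t :=
        (hd2 _ hx).comp_hasDerivAt t (hasDerivAt_polar_angle r t)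
      have h := (h1.mul (hs2 t)).sub (((h2.clm_apply hn).const_mul (r : ℂ)).mul (hs1 t))
      have htr := bilinear_trace_rotate (fderiv ℝ (fderiv ℝ u) (p (r, t))) t
      rw [hlap _ hx] at htr
      refine h.congr_deriv ?_
      simp only [map_smul, map_neg, smul_apply, Complex.real_smul, F₀, F₁, F₂]
      linear_combination -(r : ℂ) ^ 2 * s t * htr
    have hend : ∀ t, s t = 0 → u (p (r, t)) = 0 → W t = 0 := by
      intro t h1 h2
      simp only [W, h1, h2, mul_zero, zero_mul, sub_zero]
    have hWa : W (-(Real.pi / 2)) = 0 := by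
      apply hend
      · simp only [s]
        rw [show (j : ℝ) * (Real.pi / 2 - -(Real.pi / 2)) = j * Real.pi by ring,
          Real.sin_nat_mul_pi, Complex.ofReal_zero]
      · simp only [p, Real.cos_neg, Real.sin_neg, Real.cos_pi_div_two, Real.sin_pi_div_two,
          mul_zero, mul_neg, mul_one]
        apply hbc <;> rw [abs_neg, abs_of_pos hr0]
        exacts [hr'.1, hr'.2]
    have hWb : W (Real.pi / 2) = 0 := by
      apply hend
      · simp [s]
      · simp only [p, Real.cos_pi_div_two, Real.sin_pi_div_two, mul_zero, mul_one]
        apply hbc <;> rw [abs_of_pos hr0]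
        exacts [hr'.1, hr'.2]
    have hint := intervalIntegral.integral_eq_sub_of_hasDerivAt
      (fun t ht => hW t (by rwa [hI, ← uIcc_of_le hpi]))
      (((hi2.const_mul ((r : ℂ) ^ 2)).add (hi1.const_mul (r : ℂ))).sub
        (hi0.const_mul ((j : ℂ) ^ 2)))
    rw [intervalIntegral.integral_sub
      ((hi2.const_mul ((r : ℂ) ^ 2)).add (hi1.const_mul (r : ℂ))) (hi0.const_mul _),
      intervalIntegral.integral_add (hi2.const_mul _) (hi1.const_mul _),
      intervalIntegral.integral_const_mul, intervalIntegral.integral_const_mul,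
      intervalIntegral.integral_const_mul, hWa, hWb, sub_zero, ← (hω2 r hr).deriv,
      ← (hω1 r hr).deriv, ← congrFun hω0 r] at hint
    push_cast
    field_simp
    linear_combination hint
  refine ⟨?_, hode⟩
  have hdω : DifferentiableOn ℝ ω (Ioo r₁ r₂) := fun r hr =>
    (hω1 r hr).differentiableAt.differentiableWithinAt
  have hdω' : DifferentiableOn ℝ (deriv ω) (Ioo r₁ r₂) := fun r hr =>
    (hω2 r hr).differentiableAt.differentiableWithinAt
  rw [show (2 : WithTop ℕ∞) = 1 + 1 by norm_num, contDiffOn_succ_iff_deriv_of_isOpen isOpen_Ioo]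
  refine ⟨hdω, by simp, ?_⟩
  rw [show (1 : WithTop ℕ∞) = 0 + 1 by norm_num, contDiffOn_succ_iff_deriv_of_isOpen isOpen_Ioo]
  refine ⟨hdω', by simp, contDiffOn_zero.2 ?_⟩
  -- The equation itself expresses the second derivative through continuous functions.
  have hcont : ContinuousOn (fun r : ℝ => (((j : ℝ) ^ 2 / r ^ 2 : ℝ) : ℂ) * ω r
      - deriv ω r / (r : ℂ)) (Ioo r₁ r₂) := by
    have hne : ∀ r ∈ Ioo r₁ r₂, r ≠ 0 := fun r hr => (hr₁.trans hr.1).ne'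
    refine ContinuousOn.sub (.mul ?_ hdω.continuousOn) (hdω'.continuousOn.div ?_ ?_)
    · exact Complex.continuous_ofReal.comp_continuousOn
        (continuousOn_const.div (by fun_prop) fun r hr => pow_ne_zero 2 (hne r hr))
    · exact Complex.continuous_ofReal.continuousOn
    · exact fun r hr => Complex.ofReal_ne_zero.2 (hne r hr)
  exact hcont.congr fun r hr => by linear_combination hode r hr
end

section
/- Let j ≥ 1 be an integer and R > 0. Let u be a complex-valued function which is continuous and bounded on the half-disk {x = (x₁,x₂) : |x| < R, x₁ ≥ 0}, vanishes at every point (0, x₂) with |x₂| < R, and whose restriction to {x : 0 < |x| < R, x₁ ≥ 0} extends to a twice continuously differentiable function with vanishing Laplacian on an open subset of ℝ² containing {x : 0 < |x| < R, x₁ ≥ 0}. Define ζ(r) = ∫_{−π/2}^{π/2} u(r cos t, r sin t) sin(j(π/2 − t)) dt for 0 < r < R. Then the function r ↦ r^{−j} ζ(r) is constant on (0, R); that is, ζ(r) = ζ(r') (r/r')^j for all 0 < r, r' < R. -/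
open Set Filter Topology MeasureTheory

/-- Differentiation under the integral sign for a family that is jointly `C¹` in the parameter. -/
theorem hasDerivAt_intervalIntegral_of_continuousOn_s7 {E : Type*} [NormedAddCommGroup E]
    [NormedSpace ℝ E] {a b : ℝ} (hab : a ≤ b) {D : Set ℝ} (hD : IsOpen D) {f f' : ℝ → ℝ → E}
    (hf : ∀ s ∈ D, ContinuousOn (f s) (Icc a b))
    (hf' : ContinuousOn (fun p : ℝ × ℝ => f' p.1 p.2) (D ×ˢ Icc a b))
    (hder : ∀ s ∈ D, ∀ t ∈ Icc a b, HasDerivAt (fun σ => f σ t) (f' s t) s)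
    {s : ℝ} (hs : s ∈ D) :
    HasDerivAt (fun σ => ∫ t in a..b, f σ t) (∫ t in a..b, f' s t) s := by
  obtain ⟨ε, hε, hεD⟩ := Metric.nhds_basis_closedBall.mem_iff.1 (hD.mem_nhds hs)
  have hsub : uIoc a b ⊆ Icc a b := by
    rw [uIoc_of_le hab]; exact Ioc_subset_Icc_self
  obtain ⟨C, hC⟩ := ((isCompact_closedBall s ε).prod isCompact_Icc).exists_bound_of_continuousOn
    (hf'.mono (prod_mono hεD (Subset.refl (Icc a b))))
  have hmeas : ∀ g : ℝ → E, ContinuousOn g (Icc a b) →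
      AEStronglyMeasurable g (volume.restrict (uIoc a b)) := fun g hg =>
    (hg.mono hsub).aestronglyMeasurable measurableSet_uIoc
  refine (intervalIntegral.hasDerivAt_integral_of_dominated_loc_of_deriv_le
    (F := f) (F' := f') (bound := fun _ => C) (Metric.closedBall_mem_nhds s hε)
    ?_ ?_ ?_ ?_ ?_ ?_).2
  · filter_upwards [hD.mem_nhds hs] with σ hσ using hmeas _ (hf σ hσ)
  · exact ContinuousOn.intervalIntegrable (by rw [uIcc_of_le hab]; exact hf s hs)
  · exact hmeas _ (hf'.comp (f := fun t => (s, t)) (by fun_prop) fun t ht => ⟨hs, ht⟩)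
  · exact .of_forall fun t ht σ hσ => hC (σ, t) ⟨hσ, hsub ht⟩
  · exact intervalIntegrable_const
  · exact .of_forall fun t ht σ hσ => hder σ (hεD hσ) t (hsub ht)

/-- A solution of `F'' = c² F` with `c > 0` that stays bounded near `-∞` is a multiple of
`exp (c s)`. -/
theorem eq_mul_exp_of_bounded_of_hasDerivAt {F G : ℝ → ℂ} {c S C : ℝ} (hc : 0 < c)
    (hF : ∀ s < S, HasDerivAt F (G s) s) (hG : ∀ s < S, HasDerivAt G ((c : ℂ) ^ 2 * F s) s)
    (hC : ∀ s < S, ‖F s‖ ≤ C) {s s' : ℝ} (hs : s < S) (hs' : s' < S) :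
    F s = F s' * Real.exp (c * (s - s')) := by
  have hexp : ∀ (k s : ℝ), HasDerivAt (fun σ : ℝ => (Real.exp (k * σ) : ℂ))
      ((Real.exp (k * s) * k : ℝ) : ℂ) s := fun k s =>
    (((hasDerivAt_id s).const_mul k).exp.congr_deriv (by simp)).ofReal_comp
  have hconst : ∀ K : ℝ → ℂ, (∀ s < S, HasDerivAt K 0 s) → ∀ s < S, ∀ s' < S, K s = K s' := by
    intro K hK s hs s' hs'
    refine isOpen_Iio.is_const_of_deriv_eq_zero (convex_Iio S).isPreconnected
      (fun x hx => (hK x hx).differentiableAt.differentiableWithinAt)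
      (fun x hx => (hK x hx).deriv) hs hs'
  have hdecay := hconst (fun s => (G s - c * F s) * (Real.exp (c * s) : ℂ)) fun s hs =>
    (((hG s hs).sub ((hF s hs).const_mul (c : ℂ))).mul (hexp c s)).congr_deriv (by
      simp only [Pi.sub_apply]; push_cast; ring)
  have hgrow := hconst (fun s => (G s + c * F s) * (Real.exp (-c * s) : ℂ)) fun s hs =>
    (((hG s hs).add ((hF s hs).const_mul (c : ℂ))).mul (hexp (-c) s)).congr_deriv (by
      simp only [Pi.add_apply]; push_cast; ring)
  have hinv : ∀ s : ℝ, (Real.exp (c * s) : ℂ) * (Real.exp (-c * s) : ℂ) = 1 := fun s => by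
    rw [← Complex.ofReal_mul, ← Real.exp_add]; simp
  have hexp0 : Tendsto (fun σ : ℝ => Real.exp (c * σ)) atBot (𝓝 0) :=
    Real.tendsto_exp_atBot.comp (tendsto_id.const_mul_atBot hc)
  have hexp0' : Tendsto (fun σ : ℝ => (Real.exp (c * σ) : ℂ)) atBot (𝓝 0) :=
    Complex.ofReal_zero ▸ (Complex.continuous_ofReal.tendsto 0).comp hexp0
  have hFexp : Tendsto (fun σ : ℝ => F σ * (Real.exp (c * σ) : ℂ)) atBot (𝓝 0) := by
    refine squeeze_zero_norm' (a := fun σ => C * Real.exp (c * σ)) ?_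
      (by simpa using hexp0.const_mul C)
    filter_upwards [eventually_lt_atBot S] with σ hσ
    rw [norm_mul, Complex.norm_real, Real.norm_of_nonneg (Real.exp_pos _).le]
    exact mul_le_mul_of_nonneg_right (hC σ hσ) (Real.exp_pos _).le
  have hzero : (G s - c * F s) * (Real.exp (c * s) : ℂ) = 0 := by
    set k := (G s + c * F s) * (Real.exp (-c * s) : ℂ) with hk
    have hlim : Tendsto (fun σ : ℝ => k * (Real.exp (c * σ) : ℂ) * (Real.exp (c * σ) : ℂ)
        - 2 * c * (F σ * (Real.exp (c * σ) : ℂ))) atBot (𝓝 0) := by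
      simpa using ((hexp0'.const_mul k).mul hexp0').sub (hFexp.const_mul (2 * c : ℂ))
    refine tendsto_nhds_unique (tendsto_const_nhds.congr' ?_) hlim
    filter_upwards [eventually_lt_atBot S] with σ hσ
    rw [hdecay s hs σ hσ, hk, hgrow s hs σ hσ]
    linear_combination (-(G σ + c * F σ) * (Real.exp (c * σ) : ℂ)) * hinv σ
  have hGF : ∀ σ < S, G σ = c * F σ := fun σ hσ => by
    have := (hdecay σ hσ s hs).trans hzero
    rcases mul_eq_zero.1 this with h | h
    · exact sub_eq_zero.1 h
    · exact absurd (Complex.ofReal_eq_zero.1 h) (Real.exp_pos _).ne'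
  have h := hgrow s hs s' hs'
  simp only [hGF s hs, hGF s' hs'] at h
  have hc' : (2 * c : ℂ) ≠ 0 := by simpa using hc.ne'
  have hsplit : (Real.exp (c * (s - s')) : ℂ)
      = (Real.exp (c * s) : ℂ) * (Real.exp (-c * s') : ℂ) := by
    rw [← Complex.ofReal_mul, ← Real.exp_add]; congr 2; ring
  apply mul_left_cancel₀ hc'
  rw [hsplit]
  linear_combination (Real.exp (c * s) : ℂ) * h - 2 * c * F s * hinv s

/-- Two integrations by parts against `sin (j (π/2 - t))`, with no boundary contribution for a
function vanishing at `±π/2`. -/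
theorem integral_deriv_deriv_mul_sin {f f' f'' : ℝ → ℂ} (j : ℕ)
    (hf : ∀ t ∈ Icc (-(Real.pi / 2)) (Real.pi / 2), HasDerivAt f (f' t) t)
    (hf' : ∀ t ∈ Icc (-(Real.pi / 2)) (Real.pi / 2), HasDerivAt f' (f'' t) t)
    (hf'' : ContinuousOn f'' (Icc (-(Real.pi / 2)) (Real.pi / 2)))
    (hl : f (-(Real.pi / 2)) = 0) (hr : f (Real.pi / 2) = 0) :
    ∫ t in (-(Real.pi / 2))..(Real.pi / 2),
        f'' t * (Real.sin ((j : ℝ) * (Real.pi / 2 - t)) : ℂ)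
      = -(j : ℂ) ^ 2 * ∫ t in (-(Real.pi / 2))..(Real.pi / 2),
        f t * (Real.sin ((j : ℝ) * (Real.pi / 2 - t)) : ℂ) := by
  have huIcc : uIcc (-(Real.pi / 2)) (Real.pi / 2) = Icc (-(Real.pi / 2)) (Real.pi / 2) :=
    uIcc_of_le (by linarith [Real.pi_pos])
  have harg : ∀ t : ℝ, HasDerivAt (fun t : ℝ => (j : ℝ) * (Real.pi / 2 - t)) (-(j : ℝ)) t :=
    fun t => (((hasDerivAt_id t).const_sub (Real.pi / 2)).const_mul (j : ℝ)).congr_deriv (by simp)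
  have hsin : ∀ t : ℝ, HasDerivAt (fun t : ℝ => (Real.sin ((j : ℝ) * (Real.pi / 2 - t)) : ℂ))
      (-(j : ℂ) * (Real.cos ((j : ℝ) * (Real.pi / 2 - t)) : ℂ)) t := fun t =>
    (harg t).sin.ofReal_comp.congr_deriv (by push_cast; ring)
  have hcos : ∀ t : ℝ, HasDerivAt
      (fun t : ℝ => -(j : ℂ) * (Real.cos ((j : ℝ) * (Real.pi / 2 - t)) : ℂ))
      (-(j : ℂ) ^ 2 * (Real.sin ((j : ℝ) * (Real.pi / 2 - t)) : ℂ)) t := fun t =>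
    ((harg t).cos.ofReal_comp.const_mul (-(j : ℂ))).congr_deriv (by push_cast; ring)
  have hparts₁ := intervalIntegral.integral_mul_deriv_eq_deriv_mul
    (fun t ht => hf' t (huIcc ▸ ht)) (fun t _ => hsin t)
    (ContinuousOn.intervalIntegrable (huIcc ▸ hf''))
    (Continuous.intervalIntegrable (by fun_prop) (-(Real.pi / 2)) (Real.pi / 2))
  have hparts₂ := intervalIntegral.integral_mul_deriv_eq_deriv_mul
    (fun t ht => hf t (huIcc ▸ ht)) (fun t _ => hcos t)
    (ContinuousOn.intervalIntegrable fun t ht =>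
      (hf' t (huIcc ▸ ht)).continuousAt.continuousWithinAt)
    (Continuous.intervalIntegrable (by fun_prop) (-(Real.pi / 2)) (Real.pi / 2))
  have hend : Real.sin ((j : ℝ) * (Real.pi / 2 - -(Real.pi / 2))) = 0 := by
    rw [show (j : ℝ) * (Real.pi / 2 - -(Real.pi / 2)) = j * Real.pi by ring, Real.sin_nat_mul_pi]
  have hpull : ∫ t in (-(Real.pi / 2))..(Real.pi / 2),
      f t * (-(j : ℂ) ^ 2 * (Real.sin ((j : ℝ) * (Real.pi / 2 - t)) : ℂ))
      = -(j : ℂ) ^ 2 * ∫ t in (-(Real.pi / 2))..(Real.pi / 2),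
        f t * (Real.sin ((j : ℝ) * (Real.pi / 2 - t)) : ℂ) := by
    rw [← intervalIntegral.integral_const_mul]
    exact intervalIntegral.integral_congr fun t _ => by ring
  rw [← hpull, hparts₂, hl, hr]
  rw [hend] at hparts₁
  simp only [sub_self, mul_zero, Real.sin_zero, Complex.ofReal_zero, zero_sub, zero_mul]
    at hparts₁ ⊢
  rw [hparts₁, neg_neg]

/-- Logarithmic polar coordinates on the plane. -/
noncomputable def logPolar (s t : ℝ) : ℝ × ℝ := (Real.exp s * Real.cos t, Real.exp s * Real.sin t)

theorem continuous_logPolar : Continuous fun p : ℝ × ℝ => logPolar p.1 p.2 := by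
  unfold logPolar; fun_prop

theorem hasDerivAt_logPolar_left (s t : ℝ) :
    HasDerivAt (fun σ => logPolar σ t) (logPolar s t) s :=
  ((Real.hasDerivAt_exp s).mul_const _).prodMk ((Real.hasDerivAt_exp s).mul_const _)

theorem hasDerivAt_logPolar_right (s t : ℝ) :
    HasDerivAt (fun τ => logPolar s τ) (-(logPolar s t).2, (logPolar s t).1) t :=
  (((Real.hasDerivAt_cos t).const_mul _).congr_deriv (by simp [logPolar])).prodMk
    ((Real.hasDerivAt_sin t).const_mul _)

theorem ContinuousLinearMap.apply_prod_eq (L : ℝ × ℝ →L[ℝ] ℂ) (x : ℝ × ℝ) :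
    L x = x.1 * L (1, 0) + x.2 * L (0, 1) := by
  have : x = x.1 • ((1 : ℝ), (0 : ℝ)) + x.2 • ((0 : ℝ), (1 : ℝ)) := by ext <;> simp
  conv_lhs => rw [this]
  simp only [map_add, map_smul, Complex.real_smul]

/-- The derivative of `f` along the Euler field `x₁ ∂₁ + x₂ ∂₂`. -/
noncomputable def radialDeriv (f : ℝ × ℝ → ℂ) (x : ℝ × ℝ) : ℂ :=
  x.1 * fderiv ℝ f x (1, 0) + x.2 * fderiv ℝ f x (0, 1)

/-- The derivative of `f` along the rotation field `-x₂ ∂₁ + x₁ ∂₂`. -/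
noncomputable def angularDeriv (f : ℝ × ℝ → ℂ) (x : ℝ × ℝ) : ℂ :=
  -x.2 * fderiv ℝ f x (1, 0) + x.1 * fderiv ℝ f x (0, 1)

theorem hasDerivAt_comp_logPolar_left {f : ℝ × ℝ → ℂ} {s t : ℝ}
    (hf : DifferentiableAt ℝ f (logPolar s t)) :
    HasDerivAt (fun σ => f (logPolar σ t)) (radialDeriv f (logPolar s t)) s :=
  (hf.hasFDerivAt.comp_hasDerivAt s (hasDerivAt_logPolar_left s t)).congr_deriv
    (ContinuousLinearMap.apply_prod_eq _ _)

theorem hasDerivAt_comp_logPolar_right {f : ℝ × ℝ → ℂ} {s t : ℝ}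
    (hf : DifferentiableAt ℝ f (logPolar s t)) :
    HasDerivAt (fun τ => f (logPolar s τ)) (angularDeriv f (logPolar s t)) t :=
  (hf.hasFDerivAt.comp_hasDerivAt t (hasDerivAt_logPolar_right s t)).congr_deriv
    ((ContinuousLinearMap.apply_prod_eq _ _).trans (by simp [angularDeriv]))

theorem contDiffOn_fderiv_apply {f : ℝ × ℝ → ℂ} {U : Set (ℝ × ℝ)} (hU : IsOpen U) {m n : ℕ}
    (hf : ContDiffOn ℝ n f U) (hmn : m + 1 ≤ n) (e : ℝ × ℝ) :
    ContDiffOn ℝ m (fun x => fderiv ℝ f x e) U :=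
  (hf.fderiv_of_isOpen hU (by exact_mod_cast hmn)).clm_apply contDiffOn_const

theorem contDiff_ofReal_fst {n : ℕ} : ContDiff ℝ n fun x : ℝ × ℝ => (x.1 : ℂ) :=
  Complex.ofRealCLM.contDiff.comp contDiff_fst

theorem contDiff_ofReal_snd {n : ℕ} : ContDiff ℝ n fun x : ℝ × ℝ => (x.2 : ℂ) :=
  Complex.ofRealCLM.contDiff.comp contDiff_snd

theorem ContDiffOn.radialDeriv {f : ℝ × ℝ → ℂ} {U : Set (ℝ × ℝ)} (hU : IsOpen U) {m n : ℕ}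
    (hf : ContDiffOn ℝ n f U) (hmn : m + 1 ≤ n) : ContDiffOn ℝ m (radialDeriv f) U :=
  (contDiff_ofReal_fst.contDiffOn.mul (contDiffOn_fderiv_apply hU hf hmn _)).add
    (contDiff_ofReal_snd.contDiffOn.mul (contDiffOn_fderiv_apply hU hf hmn _))

theorem ContDiffOn.angularDeriv {f : ℝ × ℝ → ℂ} {U : Set (ℝ × ℝ)} (hU : IsOpen U) {m n : ℕ}
    (hf : ContDiffOn ℝ n f U) (hmn : m + 1 ≤ n) : ContDiffOn ℝ m (angularDeriv f) U :=
  (contDiff_ofReal_snd.contDiffOn.neg.mul (contDiffOn_fderiv_apply hU hf hmn _)).add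
    (contDiff_ofReal_fst.contDiffOn.mul (contDiffOn_fderiv_apply hU hf hmn _))

/-- The Laplace equation in logarithmic polar coordinates. -/
theorem radialDeriv_radialDeriv_add_angularDeriv_angularDeriv {f : ℝ × ℝ → ℂ} {x : ℝ × ℝ}
    (h₁ : DifferentiableAt ℝ (fun y => fderiv ℝ f y (1, 0)) x)
    (h₂ : DifferentiableAt ℝ (fun y => fderiv ℝ f y (0, 1)) x)
    (hlap : fderiv ℝ (fun y => fderiv ℝ f y (1, 0)) x (1, 0)
      + fderiv ℝ (fun y => fderiv ℝ f y (0, 1)) x (0, 1) = 0) :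
    radialDeriv (radialDeriv f) x + angularDeriv (angularDeriv f) x = 0 := by
  have hfst : HasFDerivAt (fun y : ℝ × ℝ => (y.1 : ℂ))
      (Complex.ofRealCLM.comp (.fst ℝ ℝ ℝ)) x :=
    (Complex.ofRealCLM.comp (.fst ℝ ℝ ℝ)).hasFDerivAt
  have hsnd : HasFDerivAt (fun y : ℝ × ℝ => (y.2 : ℂ))
      (Complex.ofRealCLM.comp (.snd ℝ ℝ ℝ)) x :=
    (Complex.ofRealCLM.comp (.snd ℝ ℝ ℝ)).hasFDerivAt
  have hrad : HasFDerivAt (radialDeriv f) _ x :=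
    (hfst.mul h₁.hasFDerivAt).add (hsnd.mul h₂.hasFDerivAt)
  have hang : HasFDerivAt (angularDeriv f) _ x :=
    (hsnd.fun_neg.mul h₁.hasFDerivAt).add (hfst.mul h₂.hasFDerivAt)
  rw [radialDeriv.eq_1 (radialDeriv f), angularDeriv.eq_1 (angularDeriv f), hrad.fderiv,
    hang.fderiv]
  simp
  linear_combination (x.1 ^ 2 + x.2 ^ 2 : ℂ) * hlap

theorem sqrt_logPolar (s t : ℝ) :
    Real.sqrt ((logPolar s t).1 ^ 2 + (logPolar s t).2 ^ 2) = Real.exp s := by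
  have : (logPolar s t).1 ^ 2 + (logPolar s t).2 ^ 2 = Real.exp s ^ 2 := by
    simp only [logPolar]
    linear_combination Real.exp s ^ 2 * Real.sin_sq_add_cos_sq t
  rw [this, Real.sqrt_sq (Real.exp_pos s).le]

/-- The `j`-th Fourier sine coefficient of a bounded harmonic function on a half-disk
vanishing on the diameter grows exactly like `r^j`: `r ↦ r^{-j} ζ(r)` is constant. -/
theorem fourier_coeff_pure_power (j : ℕ) (hj : 1 ≤ j) (R : ℝ) (hR : 0 < R)
    (u : ℝ × ℝ → ℂ)
    (hcont : ContinuousOn u {x : ℝ × ℝ | Real.sqrt (x.1 ^ 2 + x.2 ^ 2) < R ∧ 0 ≤ x.1})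
    (hbdd : ∃ C : ℝ, ∀ x ∈ {x : ℝ × ℝ | Real.sqrt (x.1 ^ 2 + x.2 ^ 2) < R ∧ 0 ≤ x.1},
      ‖u x‖ ≤ C)
    (hvan : ∀ x₂ : ℝ, |x₂| < R → u (0, x₂) = 0)
    (hext : ∃ (U : Set (ℝ × ℝ)) (v : ℝ × ℝ → ℂ), IsOpen U ∧
      {x : ℝ × ℝ | 0 < Real.sqrt (x.1 ^ 2 + x.2 ^ 2)
        ∧ Real.sqrt (x.1 ^ 2 + x.2 ^ 2) < R ∧ 0 ≤ x.1} ⊆ U ∧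
      ContDiffOn ℝ 2 v U ∧
      (∀ x ∈ U, fderiv ℝ (fun y => fderiv ℝ v y (1, 0)) x (1, 0)
        + fderiv ℝ (fun y => fderiv ℝ v y (0, 1)) x (0, 1) = 0) ∧
      (∀ x ∈ {x : ℝ × ℝ | 0 < Real.sqrt (x.1 ^ 2 + x.2 ^ 2)
        ∧ Real.sqrt (x.1 ^ 2 + x.2 ^ 2) < R ∧ 0 ≤ x.1}, v x = u x))
    (ζ : ℝ → ℂ)
    (hζ : ∀ r : ℝ, ζ r = ∫ t in (-(Real.pi / 2))..(Real.pi / 2),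
        u (r * Real.cos t, r * Real.sin t)
          * (Real.sin ((j : ℝ) * (Real.pi / 2 - t)) : ℂ)) :
    ∀ r r' : ℝ, 0 < r → r < R → 0 < r' → r' < R →
      ζ r = ζ r' * (((r / r') ^ j : ℝ) : ℂ) := by
  obtain ⟨C, hC⟩ := hbdd
  obtain ⟨U, v, hU, hsub, hv, hlap, hvu⟩ := hext
  have hpi : -(Real.pi / 2) ≤ Real.pi / 2 := by linarith [Real.pi_pos]
  set I := Icc (-(Real.pi / 2)) (Real.pi / 2)
  have hdom : ∀ s < Real.log R, ∀ t ∈ I, logPolar s t ∈ {x : ℝ × ℝ |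
      0 < Real.sqrt (x.1 ^ 2 + x.2 ^ 2) ∧ Real.sqrt (x.1 ^ 2 + x.2 ^ 2) < R ∧ 0 ≤ x.1} := by
    intro s hs t ht
    simp only [mem_ofPred_eq, sqrt_logPolar]
    exact ⟨Real.exp_pos s, (Real.lt_log_iff_exp_lt hR).1 hs,
      mul_nonneg (Real.exp_pos s).le (Real.cos_nonneg_of_mem_Icc ht)⟩
  have hPU : ∀ s < Real.log R, ∀ t ∈ I, logPolar s t ∈ U := fun s hs t ht => hsub (hdom s hs t ht)
  have hdiff : ∀ (f : ℝ × ℝ → ℂ), ContDiffOn ℝ (1 : ℕ) f U → ∀ s < Real.log R, ∀ t ∈ I,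
      DifferentiableAt ℝ f (logPolar s t) := fun f hf s hs t ht =>
    (hf.differentiableOn (by simp)).differentiableAt (hU.mem_nhds (hPU s hs t ht))
  have hv₁ : ContDiffOn ℝ (1 : ℕ) v U := hv.of_le (by norm_num)
  have hrad := ContDiffOn.radialDeriv (m := 1) hU hv le_rfl
  have hang := ContDiffOn.angularDeriv (m := 1) hU hv le_rfl
  have hφ : Continuous fun t : ℝ => (Real.sin ((j : ℝ) * (Real.pi / 2 - t)) : ℂ) := by fun_prop
  have hcomp : ∀ f : ℝ × ℝ → ℂ, ContinuousOn f U → ContinuousOn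
      (fun p : ℝ × ℝ => f (logPolar p.1 p.2)) (Iio (Real.log R) ×ˢ I) := fun f hf =>
    hf.comp continuous_logPolar.continuousOn fun p hp => hPU p.1 hp.1 p.2 hp.2
  have hcomp' : ∀ f : ℝ × ℝ → ℂ, ContinuousOn f U → ∀ s < Real.log R,
      ContinuousOn (fun t => f (logPolar s t)) I := fun f hf s hs =>
    (hcomp f hf).comp (f := fun t => (s, t)) (by fun_prop) fun t ht => ⟨hs, ht⟩
  have hderiv : ∀ f : ℝ × ℝ → ℂ, ContDiffOn ℝ (1 : ℕ) f U → ∀ s < Real.log R, HasDerivAt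
      (fun s => ∫ t in (-(Real.pi / 2))..(Real.pi / 2),
        f (logPolar s t) * (Real.sin ((j : ℝ) * (Real.pi / 2 - t)) : ℂ))
      (∫ t in (-(Real.pi / 2))..(Real.pi / 2),
        radialDeriv f (logPolar s t) * (Real.sin ((j : ℝ) * (Real.pi / 2 - t)) : ℂ)) s := by
    intro f hf s hs
    refine hasDerivAt_intervalIntegral_of_continuousOn_s7 hpi isOpen_Iio
      (fun σ hσ => (hcomp' f hf.continuousOn σ hσ).mul hφ.continuousOn)
      ((hcomp _ (ContDiffOn.radialDeriv (m := 0) hU hf le_rfl).continuousOn).mul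
        (hφ.comp continuous_snd).continuousOn)
      (fun σ hσ t ht => (hasDerivAt_comp_logPolar_left (hdiff f hf σ hσ t ht)).mul_const _) hs
  have hbdry : ∀ s < Real.log R, ∀ t ∈ I, Real.cos t = 0 → v (logPolar s t) = 0 := by
    intro s hs t ht hcos
    have hx := hdom s hs t ht
    have hx0 : (logPolar s t).1 = 0 := by simp [logPolar, hcos]
    rw [hvu _ hx, show logPolar s t = (0, (logPolar s t).2) from Prod.ext hx0 rfl]
    refine hvan _ ?_
    have := hx.2.1
    rwa [hx0, zero_pow two_ne_zero, zero_add, Real.sqrt_sq_eq_abs] at this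
  have hsecond : ∀ s < Real.log R, (∫ t in (-(Real.pi / 2))..(Real.pi / 2),
        radialDeriv (radialDeriv v) (logPolar s t)
          * (Real.sin ((j : ℝ) * (Real.pi / 2 - t)) : ℂ))
      = ((j : ℝ) : ℂ) ^ 2 * ∫ t in (-(Real.pi / 2))..(Real.pi / 2),
        v (logPolar s t) * (Real.sin ((j : ℝ) * (Real.pi / 2 - t)) : ℂ) := by
    intro s hs
    have hparts := integral_deriv_deriv_mul_sin (f := fun t => v (logPolar s t)) j
      (fun t ht => hasDerivAt_comp_logPolar_right (hdiff v hv₁ s hs t ht))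
      (fun t ht => hasDerivAt_comp_logPolar_right (hdiff _ hang s hs t ht))
      (hcomp' _ (ContDiffOn.angularDeriv (m := 0) hU hang le_rfl).continuousOn s hs)
      (hbdry s hs _ (left_mem_Icc.2 hpi) (by simp))
      (hbdry s hs _ (right_mem_Icc.2 hpi) (by simp))
    rw [Complex.ofReal_natCast, ← neg_inj, ← neg_mul, ← hparts, ← intervalIntegral.integral_neg]
    refine intervalIntegral.integral_congr fun t ht => ?_
    rw [uIcc_of_le hpi] at ht
    have := radialDeriv_radialDeriv_add_angularDeriv_angularDeriv
      (hdiff _ (contDiffOn_fderiv_apply (m := 1) hU hv le_rfl _) s hs t ht)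
      (hdiff _ (contDiffOn_fderiv_apply (m := 1) hU hv le_rfl _) s hs t ht)
      (hlap _ (hPU s hs t ht))
    linear_combination -(Real.sin ((j : ℝ) * (Real.pi / 2 - t)) : ℂ) * this
  have hbound : ∀ s < Real.log R, ‖∫ t in (-(Real.pi / 2))..(Real.pi / 2),
      v (logPolar s t) * (Real.sin ((j : ℝ) * (Real.pi / 2 - t)) : ℂ)‖
        ≤ C * |Real.pi / 2 - -(Real.pi / 2)| := by
    intro s hs
    refine intervalIntegral.norm_integral_le_of_norm_le_const fun t ht => ?_
    rw [uIoc_of_le hpi] at ht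
    have hx := hdom s hs t (Ioc_subset_Icc_self ht)
    rw [norm_mul, hvu _ hx, Complex.norm_real]
    exact (mul_le_of_le_one_right (norm_nonneg _) (Real.abs_sin_le_one _)).trans (hC _ hx.2)
  have hζv : ∀ s < Real.log R, ζ (Real.exp s) = ∫ t in (-(Real.pi / 2))..(Real.pi / 2),
      v (logPolar s t) * (Real.sin ((j : ℝ) * (Real.pi / 2 - t)) : ℂ) := by
    intro s hs
    rw [hζ]
    refine intervalIntegral.integral_congr fun t ht => ?_
    rw [uIcc_of_le hpi] at ht
    simp only [hvu _ (hdom s hs t ht)]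
    rfl
  intro r r' hr hrR hr' hrR'
  have hs := Real.log_lt_log hr hrR
  have hs' := Real.log_lt_log hr' hrR'
  have hmain := eq_mul_exp_of_bounded_of_hasDerivAt (c := j) (by exact_mod_cast hj)
    (hderiv v hv₁) (fun s hs => (hderiv _ hrad s hs).congr_deriv (hsecond s hs)) hbound hs hs'
  rw [← hζv _ hs, ← hζv _ hs', Real.exp_log hr, Real.exp_log hr', ← Real.log_div hr.ne' hr'.ne',
    Real.exp_nat_mul, Real.exp_log (div_pos hr hr')] at hmain
  exact hmain
end

section
/- Let j ≥ 1 be an integer. For x = (x₁, x₂) ∈ ℝ²_+, let θ̃₀(x) = arg(x₁ + i x₂) ∈ (−π/2, π/2) be the polar angle of x, let A₀(x) = (−x₂, x₁) / (2(x₁² + x₂²)), and define u : ℝ²_+ → ℂ by u(x) = e^{i θ̃₀(x)/2} ψ_j(x). Then u is smooth on ℝ²_+ and satisfies the Aharonov–Bohm equation pointwise: −Δu(x) + 2 i A₀(x) · ∇u(x) + |A₀(x)|² u(x) = 0 for every x ∈ ℝ²_+, i.e. (i∇ + A₀)² u = 0 in ℝ²_+. -/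
open Complex ContinuousLinearMap

/-- The angle `arg (x₁ + i x₂)` as a function of the point of the plane. -/
noncomputable def planeArg (x : ℝ × ℝ) : ℝ :=
  Complex.arg ((x.1 : ℂ) + Complex.I * (x.2 : ℂ))

/-- The real-linear form on the plane with coefficients `a` and `b`. -/
noncomputable def planeForm (a b : ℝ) : ℝ × ℝ →L[ℝ] ℝ :=
  a • ContinuousLinearMap.fst ℝ ℝ ℝ + b • ContinuousLinearMap.snd ℝ ℝ ℝ

@[simp]
lemma planeForm_apply (a b : ℝ) (v : ℝ × ℝ) : planeForm a b v = a * v.1 + b * v.2 := by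
  simp [planeForm]

lemma hasFDerivAt_const_mul_ofReal_add (a b : ℂ) (x : ℝ × ℝ) :
    HasFDerivAt (fun y : ℝ × ℝ => a * (y.1 : ℂ) + b * (y.2 : ℂ))
      (a • (ofRealCLM.comp (ContinuousLinearMap.fst ℝ ℝ ℝ))
        + b • (ofRealCLM.comp (ContinuousLinearMap.snd ℝ ℝ ℝ))) x :=
  (a • (ofRealCLM.comp (ContinuousLinearMap.fst ℝ ℝ ℝ))
    + b • (ofRealCLM.comp (ContinuousLinearMap.snd ℝ ℝ ℝ))).hasFDerivAt

lemma mem_slitPlane_of_fst_pos {x : ℝ × ℝ} (hx : 0 < x.1) :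
    (x.1 : ℂ) + I * (x.2 : ℂ) ∈ slitPlane := by
  left; simpa using hx

lemma hasFDerivAt_planeArg {x : ℝ × ℝ} (hx : 0 < x.1) :
    HasFDerivAt planeArg
      (planeForm (-x.2 / (x.1 ^ 2 + x.2 ^ 2)) (x.1 / (x.1 ^ 2 + x.2 ^ 2))) x := by
  have hz : HasFDerivAt (fun y : ℝ × ℝ => (y.1 : ℂ) + I * (y.2 : ℂ))
      ((1 : ℂ) • (ofRealCLM.comp (ContinuousLinearMap.fst ℝ ℝ ℝ))
        + I • (ofRealCLM.comp (ContinuousLinearMap.snd ℝ ℝ ℝ))) x := by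
    simpa only [one_mul] using hasFDerivAt_const_mul_ofReal_add 1 I x
  have hlog := (hasStrictDerivAt_log (mem_slitPlane_of_fst_pos hx)).hasDerivAt.comp_hasFDerivAt
    (f := fun y : ℝ × ℝ => (y.1 : ℂ) + I * (y.2 : ℂ)) x hz
  have him := imCLM.hasFDerivAt.comp x hlog
  refine (him.congr_fderiv ?_).congr_of_eventuallyEq (.of_forall fun y => ?_)
  · ext <;> simp [normSq_apply, pow_two]
  · simp [planeArg, log_im]

lemma contDiffAt_planeArg {x : ℝ × ℝ} (hx : 0 < x.1) {n : WithTop ℕ∞} :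
    ContDiffAt ℝ n planeArg x := by
  have hz : ContDiffAt ℝ n (fun y : ℝ × ℝ => (y.1 : ℂ) + I * (y.2 : ℂ)) x :=
    (ofRealCLM.contDiff.comp contDiff_fst).contDiffAt.add
      (contDiffAt_const.mul (ofRealCLM.contDiff.comp contDiff_snd).contDiffAt)
  have hlog := ((contDiffAt_log (n := n) (mem_slitPlane_of_fst_pos hx)).restrict_scalars ℝ).comp x hz
  refine (imCLM.contDiff.contDiffAt.comp x hlog).congr_of_eventuallyEq (.of_forall fun y => ?_)
  simp [planeArg, log_im]

lemma hasFDerivAt_im_const_mul_pow (c : ℂ) (n : ℕ) (x : ℝ × ℝ) :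
    HasFDerivAt (fun y : ℝ × ℝ => (c * (I * (y.1 : ℂ) + (y.2 : ℂ)) ^ n).im)
      (planeForm (c * (n * I) * (I * (x.1 : ℂ) + (x.2 : ℂ)) ^ (n - 1)).im
        (c * n * (I * (x.1 : ℂ) + (x.2 : ℂ)) ^ (n - 1)).im) x := by
  have hw : HasFDerivAt (fun y : ℝ × ℝ => I * (y.1 : ℂ) + (y.2 : ℂ))
      (I • (ofRealCLM.comp (ContinuousLinearMap.fst ℝ ℝ ℝ))
        + (1 : ℂ) • (ofRealCLM.comp (ContinuousLinearMap.snd ℝ ℝ ℝ))) x := by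
    simpa only [one_mul] using hasFDerivAt_const_mul_ofReal_add I 1 x
  have him := imCLM.hasFDerivAt.comp x ((hw.pow n).const_mul c)
  refine him.congr_fderiv ?_
  ext <;> simp [-mul_im, -mul_re] <;> ring_nf

lemma psi_eq_im_pow (j : ℕ) (x : ℝ × ℝ) : psi j x = (1 * (I * (x.1 : ℂ) + (x.2 : ℂ)) ^ j).im := by
  rw [psi, ← mul_pow, one_mul]
  congr 2
  linear_combination -(x.2 : ℂ) * I_sq

lemma contDiff_psi (j : ℕ) {n : WithTop ℕ∞} : ContDiff ℝ n (psi j) := by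
  have h : ContDiff ℝ n (fun x : ℝ × ℝ => I ^ j * ((x.1 : ℂ) - I * (x.2 : ℂ)) ^ j) :=
    contDiff_const.mul (((ofRealCLM.contDiff.comp contDiff_fst).sub
      (contDiff_const.mul (ofRealCLM.contDiff.comp contDiff_snd))).pow j)
  exact imCLM.contDiff.comp h

/-- Multiplication by the gauge factor `e^{iθ̃₀/2}` turns directional derivatives into
covariant ones. -/
lemma fderiv_exp_planeArg_mul {f : ℝ × ℝ → ℂ} {f' : ℝ × ℝ →L[ℝ] ℂ} {x : ℝ × ℝ} (hx : 0 < x.1)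
    (hf : HasFDerivAt f f' x) (v : ℝ × ℝ) :
    fderiv ℝ (fun y => exp (I * planeArg y / 2) * f y) x v =
      exp (I * planeArg x / 2) * (f' v + I / 2 *
        (planeForm (-x.2 / (x.1 ^ 2 + x.2 ^ 2)) (x.1 / (x.1 ^ 2 + x.2 ^ 2)) v : ℝ) * f x) := by
  have hθ := ((ofRealCLM.hasFDerivAt.comp x (hasFDerivAt_planeArg hx)).const_mul (I / 2)).cexp
  have h : HasFDerivAt (fun y => exp (I * planeArg y / 2) * f y) _ x :=
    (hθ.congr_of_eventuallyEq (.of_forall fun y => by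
      simp only [Function.comp_apply, ofRealCLM_apply]; congr 1; ring)).mul hf
  rw [h.fderiv]
  have e : I / 2 * (planeArg x : ℂ) = I * planeArg x / 2 := by ring
  simp only [e, add_apply, smul_apply, comp_apply, ofRealCLM_apply, smul_eq_mul, Function.comp_apply]
  ring

/-- The second derivative in the direction `v` of `e^{iθ̃₀/2} f`, for a real function `f` with
derivative `f' v` in that direction. -/
lemma fderiv_fderiv_exp_planeArg_mul {f : ℝ × ℝ → ℝ} {f' : ℝ × ℝ → ℝ × ℝ →L[ℝ] ℝ}
    (hf : ∀ y, HasFDerivAt f (f' y) y) {x v : ℝ × ℝ} {df dq : ℝ × ℝ →L[ℝ] ℝ} {q : ℝ × ℝ → ℝ}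
    (hx : 0 < x.1) (hf' : HasFDerivAt (fun y => f' y v) df x) (hq' : HasFDerivAt q dq x)
    (hq : ∀ y : ℝ × ℝ, q y =
      planeForm (-y.2 / (y.1 ^ 2 + y.2 ^ 2)) (y.1 / (y.1 ^ 2 + y.2 ^ 2)) v) :
    fderiv ℝ (fun y => fderiv ℝ (fun z => exp (I * planeArg z / 2) * (f z : ℂ)) y v) x v =
      exp (I * planeArg x / 2) *
        (df v + I / 2 * (dq v * f x + 2 * q x * f' x v) - (q x) ^ 2 / 4 * f x) := by
  have hev : (fun y => fderiv ℝ (fun z => exp (I * planeArg z / 2) * (f z : ℂ)) y v)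
      =ᶠ[nhds x] fun y => exp (I * planeArg y / 2) *
        ((f' y v : ℂ) + I / 2 * ((q y * f y : ℝ) : ℂ)) := by
    filter_upwards [(isOpen_lt continuous_const continuous_fst).mem_nhds hx] with y hy
    have hfy : HasFDerivAt (fun z => (f z : ℂ)) _ y := ofRealCLM.hasFDerivAt.comp y (hf y)
    rw [fderiv_exp_planeArg_mul hy hfy, ← hq]
    simp [mul_assoc]
  have h1 : HasFDerivAt (fun y => (f' y v : ℂ)) _ x := ofRealCLM.hasFDerivAt.comp x hf'
  have h2 : HasFDerivAt (fun y => ((q y * f y : ℝ) : ℂ)) _ x :=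
    ofRealCLM.hasFDerivAt.comp x (hq'.mul (hf x))
  have h : HasFDerivAt (fun y => (f' y v : ℂ) + I / 2 * ((q y * f y : ℝ) : ℂ)) _ x :=
    h1.add (h2.const_mul (I / 2))
  rw [hev.fderiv_eq, fderiv_exp_planeArg_mul hx h, ← hq]
  simp only [add_apply, smul_apply, comp_apply, ofRealCLM_apply, smul_eq_mul, ofReal_add, ofReal_mul]
  linear_combination exp (I * planeArg x / 2) * (q x : ℂ) ^ 2 * f x / 4 * I_sq

lemma hasFDerivAt_div_normSq {x : ℝ × ℝ} (hx : 0 < x.1) {g : ℝ × ℝ → ℝ} {g' : ℝ × ℝ →L[ℝ] ℝ}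
    (hg : HasFDerivAt g g' x) :
    HasFDerivAt (fun y : ℝ × ℝ => g y / (y.1 ^ 2 + y.2 ^ 2))
      ((x.1 ^ 2 + x.2 ^ 2)⁻¹ • g' - (g x / (x.1 ^ 2 + x.2 ^ 2) ^ 2) •
        planeForm (2 * x.1) (2 * x.2)) x := by
  have hr : x.1 ^ 2 + x.2 ^ 2 ≠ 0 := by positivity
  have h := hg.mul ((hasDerivAt_inv hr).comp_hasFDerivAt x
    (((hasFDerivAt_fst (𝕜 := ℝ) (p := x)).pow 2).add ((hasFDerivAt_snd (𝕜 := ℝ) (p := x)).pow 2)))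
  refine (h.congr_fderiv ?_).congr_of_eventuallyEq (.of_forall fun y => ?_)
  · ext <;> simp <;> field_simp <;> ring
  · simp [div_eq_mul_inv]

/-- `u = e^{iθ̃₀/2} ψ_j` is smooth on the open half-plane and satisfies the
Aharonov–Bohm equation `(i∇ + A₀)² u = -Δu + 2iA₀·∇u + |A₀|²u = 0` there, where
`A₀(x) = (-x₂, x₁)/(2|x|²)` and `θ̃₀(x) = arg(x₁ + i x₂)`. -/
theorem aharonov_bohm_solution (j : ℕ) (hj : 1 ≤ j) (u : ℝ × ℝ → ℂ)
    (hu : ∀ x : ℝ × ℝ,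
      u x = Complex.exp (Complex.I * (Complex.arg ((x.1 : ℂ) + Complex.I * (x.2 : ℂ))) / 2)
              * ((psi j x : ℝ) : ℂ)) :
    ContDiffOn ℝ (⊤ : ℕ∞) u {x : ℝ × ℝ | 0 < x.1} ∧
    ∀ x ∈ {x : ℝ × ℝ | 0 < x.1},
      -(fderiv ℝ (fun y => fderiv ℝ u y (1, 0)) x (1, 0)
          + fderiv ℝ (fun y => fderiv ℝ u y (0, 1)) x (0, 1))
        + 2 * Complex.I *
            (((-x.2 / (2 * (x.1 ^ 2 + x.2 ^ 2)) : ℝ) : ℂ) * fderiv ℝ u x (1, 0)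
              + ((x.1 / (2 * (x.1 ^ 2 + x.2 ^ 2)) : ℝ) : ℂ) * fderiv ℝ u x (0, 1))
        + (((-x.2 / (2 * (x.1 ^ 2 + x.2 ^ 2))) ^ 2
              + (x.1 / (2 * (x.1 ^ 2 + x.2 ^ 2))) ^ 2 : ℝ) : ℂ) * u x = 0 := by
  obtain rfl : u = fun x => exp (I * planeArg x / 2) * (psi j x : ℂ) := funext hu
  refine ⟨fun x hx => ?_, fun x hx => ?_⟩
  · have hθ : ContDiffAt ℝ (⊤ : ℕ∞) (fun y => (planeArg y : ℂ)) x :=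
      ofRealCLM.contDiff.contDiffAt.comp x (contDiffAt_planeArg hx)
    have hψ : ContDiffAt ℝ (⊤ : ℕ∞) (fun y => (psi j y : ℂ)) x :=
      ofRealCLM.contDiff.contDiffAt.comp x (contDiff_psi j).contDiffAt
    exact (((contDiffAt_const.mul hθ).div_const 2).cexp.mul hψ).contDiffWithinAt
  · replace hx : 0 < x.1 := hx
    have hψ (y : ℝ × ℝ) : HasFDerivAt (psi j) _ y :=
      (hasFDerivAt_im_const_mul_pow 1 j y).congr_of_eventuallyEq
        (.of_forall fun z => psi_eq_im_pow j z)
    have hψx := hasFDerivAt_im_const_mul_pow (1 * (j * I)) (j - 1) x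
    have hψy := hasFDerivAt_im_const_mul_pow (1 * j) (j - 1) x
    have hqx := hasFDerivAt_div_normSq hx (g := fun y => -y.2)
      (hasFDerivAt_snd (𝕜 := ℝ) (p := x)).neg
    have hqy := hasFDerivAt_div_normSq hx (hasFDerivAt_fst (𝕜 := ℝ) (p := x))
    have hψx' := hψx.congr_of_eventuallyEq (f₁ := fun y => planeForm
      (1 * (j * I) * (I * (y.1 : ℂ) + (y.2 : ℂ)) ^ (j - 1)).im
      (1 * j * (I * (y.1 : ℂ) + (y.2 : ℂ)) ^ (j - 1)).im (1, 0)) (.of_forall fun y => by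
        beta_reduce; rw [planeForm_apply, mul_one, mul_zero, add_zero])
    have hψy' := hψy.congr_of_eventuallyEq (f₁ := fun y => planeForm
      (1 * (j * I) * (I * (y.1 : ℂ) + (y.2 : ℂ)) ^ (j - 1)).im
      (1 * j * (I * (y.1 : ℂ) + (y.2 : ℂ)) ^ (j - 1)).im (0, 1)) (.of_forall fun y => by
        beta_reduce; rw [planeForm_apply, mul_one, mul_zero, zero_add])
    have hψc : HasFDerivAt (fun z => (psi j z : ℂ)) _ x := ofRealCLM.hasFDerivAt.comp x (hψ x)
    have hlap : (1 * (j * I) * (((j - 1 : ℕ) : ℂ) * I) *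
          (I * (x.1 : ℂ) + (x.2 : ℂ)) ^ (j - 1 - 1)).im =
        -(1 * j * ((j - 1 : ℕ) : ℂ) * (I * (x.1 : ℂ) + (x.2 : ℂ)) ^ (j - 1 - 1)).im := by
      rw [← neg_im]
      congr 1
      linear_combination (j * ((j - 1 : ℕ) : ℂ) *
        (I * (x.1 : ℂ) + (x.2 : ℂ)) ^ (j - 1 - 1)) * I_sq
    have hr : (x.1 : ℂ) ^ 2 + (x.2 : ℂ) ^ 2 ≠ 0 := by
      exact_mod_cast (by positivity : x.1 ^ 2 + x.2 ^ 2 ≠ 0)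
    rw [fderiv_fderiv_exp_planeArg_mul hψ hx hψx' hqx (fun y => by simp),
      fderiv_fderiv_exp_planeArg_mul hψ hx hψy' hqy (fun y => by simp),
      fderiv_exp_planeArg_mul hx hψc, fderiv_exp_planeArg_mul hx hψc]
    simp only [planeForm_apply, hlap, comp_apply, ofRealCLM_apply, sub_apply, smul_apply,
      neg_apply, coe_fst', coe_snd', smul_eq_mul]
    generalize (1 * (j * I) * (I * (x.1 : ℂ) + (x.2 : ℂ)) ^ (j - 1)).im = a
    generalize (1 * j * (I * (x.1 : ℂ) + (x.2 : ℂ)) ^ (j - 1)).im = b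
    generalize (1 * j * ((j - 1 : ℕ) : ℂ) * (I * (x.1 : ℂ) + (x.2 : ℂ)) ^ (j - 1 - 1)).im = c
    generalize psi j x = p
    generalize exp (I * planeArg x / 2) = e
    push_cast
    field_simp
    ring_nf
    simp only [I_sq]
    ring
end

section
/- Let a = (a₁, a₂) ∈ ℝ² and let A_a(x) = (1/2)(−(x₂ − a₂), x₁ − a₁)/|x − a|². Then for every smooth compactly supported function u : ℝ² → ℂ whose support does not contain a (i.e. u ∈ C_c^∞(ℝ² \ {a}; ℂ)), the Hardy-type inequality ∫_{ℝ²} |i∇u(x) + A_a(x) u(x)|² dx ≥ (1/4) ∫_{ℝ²} |u(x)|² / |x − a|² dx holds, where |·| denotes the Hermitian norm on ℂ². -/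
open MeasureTheory Set Real

/-- Linearity of the Fourier coefficients on an interval. -/
theorem fourierCoeffOn_add_of_continuous {a b : ℝ} (hab : a < b) {f g : ℝ → ℂ}
    (hf : Continuous f) (hg : Continuous g) (n : ℤ) :
    fourierCoeffOn hab (fun x => f x + g x) n = fourierCoeffOn hab f n + fourierCoeffOn hab g n := by
  have hc : Continuous fun x : ℝ => fourier (-n) (x : AddCircle (b - a)) :=
    (map_continuous (fourier (-n))).comp (AddCircle.continuous_mk' _)
  simp only [fourierCoeffOn_eq_integral, smul_add]
  rw [intervalIntegral.integral_add (Continuous.intervalIntegrable (by fun_prop) _ _)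
    (Continuous.intervalIntegrable (by fun_prop) _ _), smul_add]

/-- The Fourier coefficients of the derivative of a function with equal values at `±π`. -/
theorem fourierCoeffOn_deriv_of_eq_endpoints {f f' : ℝ → ℂ} (hff' : ∀ x, HasDerivAt f (f' x) x)
    (hf' : Continuous f') (hper : f π = f (-π)) (hab : -π < π) (n : ℤ) :
    fourierCoeffOn hab f' n = Complex.I * n * fourierCoeffOn hab f n := by
  rcases eq_or_ne n 0 with rfl | hn
  · rw [fourierCoeffOn_eq_integral]
    simp [intervalIntegral.integral_eq_sub_of_hasDerivAt (fun x _ => hff' x)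
      (hf'.intervalIntegrable _ _), hper]
  · rw [fourierCoeffOn_of_hasDerivAt hab hn (fun x _ => hff' x) (hf'.intervalIntegrable _ _), hper]
    have hπ : (π : ℂ) ≠ 0 := by exact_mod_cast pi_ne_zero
    have hn' : (n : ℂ) ≠ 0 := by exact_mod_cast hn
    push_cast
    field_simp
    ring

/-- Parseval's identity for a continuous function on an interval. -/
theorem hasSum_sq_fourierCoeffOn_of_continuous {a b : ℝ} (hab : a < b) {f : ℝ → ℂ}
    (hf : Continuous f) :
    HasSum (fun i => ‖fourierCoeffOn hab f i‖ ^ 2) ((b - a)⁻¹ * ∫ x in a..b, ‖f x‖ ^ 2) := by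
  refine hasSum_sq_fourierCoeffOn hab ((memLp_two_iff_integrable_sq_norm ?_).2 ?_)
  · exact hf.aestronglyMeasurable
  · exact ((hf.norm.pow 2).integrableOn_Icc (μ := volume) (a := a) (b := b)).mono_set
      Ioc_subset_Icc_self

/-- The lowest eigenvalue of `(i d/dθ + 1/2)²` on periodic functions is `1/4`. -/
theorem quarter_integral_sq_le_integral_sq_magnetic_deriv {f f' : ℝ → ℂ}
    (hff' : ∀ x, HasDerivAt f (f' x) x) (hf' : Continuous f') (hper : f π = f (-π)) :
    (1 / 4) * ∫ x in (-π)..π, ‖f x‖ ^ 2 ≤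
      ∫ x in (-π)..π, ‖Complex.I * f' x + 1 / 2 * f x‖ ^ 2 := by
  have hab : -π < π := by linarith [pi_pos]
  have hf : Continuous f := continuous_iff_continuousAt.2 fun x => (hff' x).continuousAt
  have hsum := hasSum_sq_fourierCoeffOn_of_continuous hab hf
  have hsum' := hasSum_sq_fourierCoeffOn_of_continuous hab
    (f := fun x => Complex.I * f' x + 1 / 2 * f x) (by fun_prop)
  have hle := hasSum_le (fun n => ?_) (hsum.mul_left (1 / 4)) hsum'
  · rw [mul_left_comm] at hle
    exact le_of_mul_le_mul_left hle (inv_pos.2 (by linarith))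
  · rw [fourierCoeffOn_add_of_continuous hab (by fun_prop) (by fun_prop),
      fourierCoeffOn.const_mul, fourierCoeffOn.const_mul,
      fourierCoeffOn_deriv_of_eq_endpoints hff' hf' hper hab]
    set c := fourierCoeffOn hab f n
    have hc : Complex.I * (Complex.I * n * c) + 1 / 2 * c = ((1 / 2 - n : ℝ) : ℂ) * c := by
      push_cast
      linear_combination (n * c) * Complex.I_mul_I
    rw [hc, norm_mul, mul_pow, Complex.norm_real, Real.norm_eq_abs, sq_abs]
    refine mul_le_mul_of_nonneg_right ?_ (by positivity)
    have hn : (0 : ℝ) ≤ n * (n - 1) := by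
      rcases le_or_gt n 0 with h | h
      · have : (n : ℝ) ≤ 0 := by exact_mod_cast h
        nlinarith
      · have : (1 : ℝ) ≤ n := by exact_mod_cast h
        nlinarith
    nlinarith

/-- A function vanishing off a compact set and continuous at its points is integrable. -/
theorem integrable_of_continuousAt_of_eq_zero_compl {K : Set (ℝ × ℝ)} (hK : IsCompact K)
    {G : ℝ × ℝ → ℝ} (hG : ∀ x ∈ K, ContinuousAt G x) (hzero : ∀ x ∉ K, G x = 0) :
    Integrable G := by
  have hsub : tsupport G ⊆ K :=
    closure_minimal (fun x hx => by_contra fun h => hx (hzero x h)) hK.isClosed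
  exact (continuous_of_tsupport fun x hx => hG x (hsub hx)).integrable_of_hasCompactSupport
    (HasCompactSupport.intro hK hzero)

/-- A function whose integrals over all circles around `a` are nonnegative has nonnegative
integral. -/
theorem integral_nonneg_of_circle_integral_nonneg (a : ℝ × ℝ) (F : ℝ × ℝ → ℝ)
    (hF : ∀ r > 0, 0 ≤ ∫ θ in (-π)..π, F (r * cos θ + a.1, r * sin θ + a.2)) :
    0 ≤ ∫ x, F x := by
  rw [← integral_add_right_eq_self F a, ← integral_comp_polarCoord_symm]
  by_cases hint : IntegrableOn
    (fun p : ℝ × ℝ => p.1 • F (polarCoord.symm p + a)) polarCoord.target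
  · rw [polarCoord_target] at hint ⊢
    rw [Measure.volume_eq_prod] at hint ⊢
    rw [setIntegral_prod _ hint]
    refine setIntegral_nonneg measurableSet_Ioi fun r hr => ?_
    have h := hF r hr
    rw [intervalIntegral.integral_of_le (by linarith [pi_pos]),
      integral_Ioc_eq_integral_Ioo] at h
    simp only [smul_eq_mul, integral_const_mul]
    exact mul_nonneg (le_of_lt hr) h
  · exact (integral_undef hint).ge

/-- The tangential part of a vector of `ℂ²` is bounded by its Hermitian norm. -/
theorem sq_norm_tangential_le (θ : ℝ) (z w : ℂ) :
    ‖-(sin θ : ℂ) * z + (cos θ : ℂ) * w‖ ^ 2 ≤ ‖z‖ ^ 2 + ‖w‖ ^ 2 := by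
  simp only [← Complex.normSq_eq_norm_sq, Complex.normSq_apply, ← Complex.ofReal_neg, Complex.add_re, Complex.add_im,
    Complex.re_ofReal_mul, Complex.im_ofReal_mul]
  have h := sin_sq_add_cos_sq θ
  have key : z.re * z.re + z.im * z.im + (w.re * w.re + w.im * w.im) =
      (sin θ ^ 2 + cos θ ^ 2) * (z.re * z.re + z.im * z.im + (w.re * w.re + w.im * w.im)) := by
    rw [h, one_mul]
  rw [key]
  nlinarith [sq_nonneg (cos θ * z.re + sin θ * w.re), sq_nonneg (cos θ * z.im + sin θ * w.im)]

/-- Hardy-type inequality for the Aharonov–Bohm potential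
`A_a(x) = (1/2)(-(x₂-a₂), x₁-a₁)/|x-a|²` with circulation `1/2`:
for `u ∈ C_c^∞(ℝ² \ {a}; ℂ)`,
`∫ |i∇u + A_a u|² ≥ (1/4) ∫ |u|²/|x-a|²`. -/
theorem hardy_aharonov_bohm (a : ℝ × ℝ) (u : ℝ × ℝ → ℂ)
    (hsmooth : ContDiff ℝ (⊤ : ℕ∞) u) (hsupp : HasCompactSupport u)
    (ha : a ∉ tsupport u) :
    (∫ x : ℝ × ℝ,
        (‖Complex.I * fderiv ℝ u x (1, 0)
            + ((-(x.2 - a.2) / (2 * ((x.1 - a.1) ^ 2 + (x.2 - a.2) ^ 2)) : ℝ) : ℂ) * u x‖ ^ 2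
          + ‖Complex.I * fderiv ℝ u x (0, 1)
            + (((x.1 - a.1) / (2 * ((x.1 - a.1) ^ 2 + (x.2 - a.2) ^ 2)) : ℝ) : ℂ) * u x‖ ^ 2))
      ≥ (1 / 4) * ∫ x : ℝ × ℝ, ‖u x‖ ^ 2 / ((x.1 - a.1) ^ 2 + (x.2 - a.2) ^ 2) := by
  have hdiff : Differentiable ℝ u := hsmooth.differentiable (by simp)
  have hcu : Continuous u := hsmooth.continuous
  have hcd : Continuous (fderiv ℝ u) := hsmooth.continuous_fderiv (by simp)
  have hpos : ∀ x ∈ tsupport u, (x.1 - a.1) ^ 2 + (x.2 - a.2) ^ 2 ≠ 0 := fun x hx h => by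
    have h1 : (x.1 - a.1) ^ 2 = 0 := by nlinarith [sq_nonneg (x.1 - a.1), sq_nonneg (x.2 - a.2)]
    have h2 : (x.2 - a.2) ^ 2 = 0 := by nlinarith
    have : x = a := Prod.ext (sub_eq_zero.1 (pow_eq_zero_iff two_ne_zero |>.1 h1))
      (sub_eq_zero.1 (pow_eq_zero_iff two_ne_zero |>.1 h2))
    exact ha (this ▸ hx)
  have hu0 : ∀ x ∉ tsupport u, u x = 0 := fun x hx => image_eq_zero_of_notMem_tsupport hx
  have hd0 : ∀ x ∉ tsupport u, fderiv ℝ u x = 0 := fun x hx =>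
    image_eq_zero_of_notMem_tsupport fun h => hx (tsupport_fderiv_subset ℝ h)
  have hint₁ := integrable_of_continuousAt_of_eq_zero_compl hsupp
    (G := fun x : ℝ × ℝ => ‖Complex.I * fderiv ℝ u x (1, 0)
            + ((-(x.2 - a.2) / (2 * ((x.1 - a.1) ^ 2 + (x.2 - a.2) ^ 2)) : ℝ) : ℂ) * u x‖ ^ 2
          + ‖Complex.I * fderiv ℝ u x (0, 1)
            + (((x.1 - a.1) / (2 * ((x.1 - a.1) ^ 2 + (x.2 - a.2) ^ 2)) : ℝ) : ℂ) * u x‖ ^ 2)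
    (fun x hx => by
      have := hpos x hx
      fun_prop (disch := simpa using this))
    (fun x hx => by simp [hu0 x hx, hd0 x hx])
  have hint₂ := integrable_of_continuousAt_of_eq_zero_compl hsupp
    (G := fun x : ℝ × ℝ => ‖u x‖ ^ 2 / ((x.1 - a.1) ^ 2 + (x.2 - a.2) ^ 2))
    (fun x hx => by
      have := hpos x hx
      fun_prop (disch := simpa using this))
    (fun x hx => by simp [hu0 x hx])
  rw [ge_iff_le, ← sub_nonneg, ← integral_const_mul, ← integral_sub hint₁ (hint₂.const_mul _)]
  refine integral_nonneg_of_circle_integral_nonneg a _ fun r hr => ?_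
  set γ : ℝ → ℝ × ℝ := fun θ => (r * cos θ + a.1, r * sin θ + a.2) with hγ
  have hγc : Continuous γ := by fun_prop
  have hγd : ∀ θ, HasDerivAt γ (r * -sin θ, r * cos θ) θ := fun θ =>
    (((hasDerivAt_cos θ).const_mul r).add_const a.1).prodMk
      (((hasDerivAt_sin θ).const_mul r).add_const a.2)
  set f' : ℝ → ℂ := fun θ => fderiv ℝ u (γ θ) (r * -sin θ, r * cos θ) with hf'
  have hff' : ∀ θ, HasDerivAt (u ∘ γ) (f' θ) θ := fun θ =>
    (hdiff (γ θ)).hasFDerivAt.comp_hasDerivAt θ (hγd θ)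
  have hf'c : Continuous f' := by fun_prop
  have hlow := quarter_integral_sq_le_integral_sq_magnetic_deriv hff' hf'c (by simp [hγ])
  have hradius : ∀ θ, ((γ θ).1 - a.1) ^ 2 + ((γ θ).2 - a.2) ^ 2 = r ^ 2 := fun θ => by
    simp only [hγ, add_sub_cancel_right]
    linear_combination r ^ 2 * sin_sq_add_cos_sq θ
  have hcγ : Continuous fun θ => u (γ θ) := hcu.comp hγc
  rw [← intervalIntegral.integral_const_mul, ← sub_nonneg, ← intervalIntegral.integral_sub
    (Continuous.intervalIntegrable (by fun_prop) _ _)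
    (Continuous.intervalIntegrable (by simp only [Function.comp_apply]; fun_prop) _ _)] at hlow
  have hlow' := mul_nonneg (inv_nonneg.2 (sq_nonneg r)) hlow
  rw [← intervalIntegral.integral_const_mul] at hlow'
  refine hlow'.trans (intervalIntegral.integral_mono_on (by linarith [pi_pos])
    (Continuous.intervalIntegrable (by simp only [Function.comp_apply]; fun_prop) _ _)
    (Continuous.intervalIntegrable ?_ _ _) fun θ _ => ?_)
  · change Continuous fun θ => ‖Complex.I * fderiv ℝ u (γ θ) (1, 0) + ((-((γ θ).2 - a.2) /
      (2 * (((γ θ).1 - a.1) ^ 2 + ((γ θ).2 - a.2) ^ 2)) : ℝ) : ℂ) * u (γ θ)‖ ^ 2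
      + ‖Complex.I * fderiv ℝ u (γ θ) (0, 1) + ((((γ θ).1 - a.1) /
      (2 * (((γ θ).1 - a.1) ^ 2 + ((γ θ).2 - a.2) ^ 2)) : ℝ) : ℂ) * u (γ θ)‖ ^ 2
      - 1 / 4 * (‖u (γ θ)‖ ^ 2 / (((γ θ).1 - a.1) ^ 2 + ((γ θ).2 - a.2) ^ 2))
    simp only [hradius]
    fun_prop
  · change _ ≤ ‖Complex.I * fderiv ℝ u (γ θ) (1, 0) + ((-((γ θ).2 - a.2) /
      (2 * (((γ θ).1 - a.1) ^ 2 + ((γ θ).2 - a.2) ^ 2)) : ℝ) : ℂ) * u (γ θ)‖ ^ 2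
      + ‖Complex.I * fderiv ℝ u (γ θ) (0, 1) + ((((γ θ).1 - a.1) /
      (2 * (((γ θ).1 - a.1) ^ 2 + ((γ θ).2 - a.2) ^ 2)) : ℝ) : ℂ) * u (γ θ)‖ ^ 2
      - 1 / 4 * (‖u (γ θ)‖ ^ 2 / (((γ θ).1 - a.1) ^ 2 + ((γ θ).2 - a.2) ^ 2))
    simp only [hradius]
    have hdir : f' θ = r * (-(sin θ : ℂ) * fderiv ℝ u (γ θ) (1, 0)
        + (cos θ : ℂ) * fderiv ℝ u (γ θ) (0, 1)) := by
      have hv : ((r * -sin θ, r * cos θ) : ℝ × ℝ) =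
          (r * -sin θ) • ((1, 0) : ℝ × ℝ) + (r * cos θ) • ((0, 1) : ℝ × ℝ) := by simp
      simp only [hf']
      rw [hv, map_add, map_smul, map_smul, Complex.real_smul, Complex.real_smul]
      push_cast
      ring
    have hx : (γ θ).1 - a.1 = r * cos θ := by simp [hγ]
    have hy : (γ θ).2 - a.2 = r * sin θ := by simp [hγ]
    have hr0 : (r : ℂ) ≠ 0 := by exact_mod_cast hr.ne'
    have htan := sq_norm_tangential_le θ
      (Complex.I * fderiv ℝ u (γ θ) (1, 0) +
        ((-((γ θ).2 - a.2) / (2 * r ^ 2) : ℝ) : ℂ) * u (γ θ))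
      (Complex.I * fderiv ℝ u (γ θ) (0, 1) +
        ((((γ θ).1 - a.1) / (2 * r ^ 2) : ℝ) : ℂ) * u (γ θ))
    have hcirc : (sin θ : ℂ) ^ 2 + (cos θ : ℂ) ^ 2 = 1 := by
      exact_mod_cast sin_sq_add_cos_sq θ
    have heq : -(sin θ : ℂ) * (Complex.I * fderiv ℝ u (γ θ) (1, 0) +
        ((-((γ θ).2 - a.2) / (2 * r ^ 2) : ℝ) : ℂ) * u (γ θ)) +
        (cos θ : ℂ) * (Complex.I * fderiv ℝ u (γ θ) (0, 1) +
        ((((γ θ).1 - a.1) / (2 * r ^ 2) : ℝ) : ℂ) * u (γ θ)) =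
        ((r⁻¹ : ℝ) : ℂ) * (Complex.I * f' θ + 1 / 2 * u (γ θ)) := by
      rw [hdir, hx, hy]
      push_cast [-Complex.ofReal_sin, -Complex.ofReal_cos]
      field_simp
      linear_combination u (γ θ) * hcirc
    rw [heq, norm_mul, mul_pow, Complex.norm_real, norm_eq_abs, sq_abs, inv_pow] at htan
    rw [mul_sub]
    refine sub_le_sub htan (le_of_eq ?_)
    simp only [Function.comp_apply]
    ring
end

section
/- Let r > 0 and a ∈ D_r^+ = {x = (x₁,x₂) : |x| < r, x₁ > 0}. Then for every complex-valued function u which is smooth on an open neighborhood of the closure of D_r^+, vanishes on a neighborhood of a, and vanishes at every point with x₁ = 0, the Poincaré-type inequality (1/r²) ∫_{D_r^+} |u|² dx ≤ (1/r) ∫_{S_r^+} |u|² ds + ∫_{D_r^+} |i∇u + A_a u|² dx holds, where S_r^+ = {x : |x| = r, x₁ ≥ 0} is the half-circle of radius r and ds denotes arclength measure. -/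
open MeasureTheory Set Filter Topology

/-- Pointwise diamagnetic-type estimate: `p`, `q` play the role of the partial derivatives of a
function with value `z`, and `A`, `B` that of the components of a real vector potential. -/
lemma norm_sq_le_radial_add_magnetic (z p q : ℂ) (x y A B r : ℝ) (h : x ^ 2 + y ^ 2 ≤ r ^ 2) :
    ‖z‖ ^ 2 ≤ (2 * ‖z‖ ^ 2 + 2 * inner ℝ z ((x : ℂ) * p + (y : ℂ) * q))
      + r ^ 2 * (‖Complex.I * p + (A : ℂ) * z‖ ^ 2 + ‖Complex.I * q + (B : ℂ) * z‖ ^ 2) := by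
  simp only [Complex.sq_norm, Complex.normSq_apply, Complex.inner, Complex.mul_re, Complex.mul_im,
    Complex.add_re, Complex.add_im, Complex.I_re, Complex.I_im, Complex.ofReal_re,
    Complex.ofReal_im, Complex.conj_re, Complex.conj_im]
  obtain ⟨z₁, z₂⟩ := z
  obtain ⟨p₁, p₂⟩ := p
  obtain ⟨q₁, q₂⟩ := q
  have hP : 0 ≤ (r ^ 2 - (x ^ 2 + y ^ 2)) * ((-p₂ + A * z₁) ^ 2 + (p₁ + A * z₂) ^ 2
      + (-q₂ + B * z₁) ^ 2 + (q₁ + B * z₂) ^ 2) :=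
    mul_nonneg (sub_nonneg.2 h) (by positivity)
  linear_combination hP + sq_nonneg (z₁ + x * (p₁ + A * z₂) + y * (q₁ + B * z₂))
    + sq_nonneg (z₂ - x * (-p₂ + A * z₁) - y * (-q₂ + B * z₁))
    + sq_nonneg (x * (-q₂ + B * z₁) - y * (-p₂ + A * z₁))
    + sq_nonneg (x * (q₁ + B * z₂) - y * (p₁ + A * z₂))

lemma measurableSet_halfDisk (r : ℝ) :
    MeasurableSet {x : ℝ × ℝ | Real.sqrt (x.1 ^ 2 + x.2 ^ 2) < r ∧ 0 < x.1} := by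
  have h₁ : IsOpen {x : ℝ × ℝ | Real.sqrt (x.1 ^ 2 + x.2 ^ 2) < r} :=
    isOpen_lt (by fun_prop) continuous_const
  have h₂ : IsOpen {x : ℝ × ℝ | 0 < x.1} := isOpen_lt continuous_const continuous_fst
  exact (h₁.inter h₂).measurableSet

/-- The half-disk is the image of a rectangle in polar coordinates. -/
lemma polar_mem_halfDisk_iff {r ρ t : ℝ} (hρ : 0 < ρ) (ht : t ∈ Ioo (-Real.pi) Real.pi) :
    (ρ * Real.cos t, ρ * Real.sin t) ∈
        {x : ℝ × ℝ | Real.sqrt (x.1 ^ 2 + x.2 ^ 2) < r ∧ 0 < x.1} ↔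
      ρ < r ∧ t ∈ Ioo (-(Real.pi / 2)) (Real.pi / 2) := by
  have hs : Real.sqrt ((ρ * Real.cos t) ^ 2 + (ρ * Real.sin t) ^ 2) = ρ := by
    rw [show (ρ * Real.cos t) ^ 2 + (ρ * Real.sin t) ^ 2 = ρ ^ 2 by
      linear_combination ρ ^ 2 * Real.sin_sq_add_cos_sq t, Real.sqrt_sq hρ.le]
  simp only [mem_ofPred_eq, hs, mul_pos_iff_of_pos_left hρ]
  refine and_congr_right fun _ => ⟨fun h => ?_, Real.cos_pos_of_mem_Ioo⟩
  by_contra hn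
  rw [mem_Ioo, not_and_or, not_lt, not_lt] at hn
  rcases hn with hn | hn
  · have := Real.cos_nonpos_of_pi_div_two_le_of_le (x := -t) (by linarith) (by linarith [ht.1])
    rw [Real.cos_neg] at this
    linarith
  · linarith [Real.cos_nonpos_of_pi_div_two_le_of_le hn (by linarith [ht.2])]

/-- Closed polar rectangles are mapped into the closure of the half-disk. -/
lemma polar_mem_closure_halfDisk {r : ℝ} (hr : 0 < r) {p : ℝ × ℝ}
    (hp : p ∈ Icc 0 r ×ˢ Icc (-(Real.pi / 2)) (Real.pi / 2)) :
    (p.1 * Real.cos p.2, p.1 * Real.sin p.2) ∈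
      closure {x : ℝ × ℝ | Real.sqrt (x.1 ^ 2 + x.2 ^ 2) < r ∧ 0 < x.1} := by
  have hpi := Real.pi_pos
  have hmaps : MapsTo (fun p : ℝ × ℝ => (p.1 * Real.cos p.2, p.1 * Real.sin p.2))
      (Ioo 0 r ×ˢ Ioo (-(Real.pi / 2)) (Real.pi / 2))
      {x : ℝ × ℝ | Real.sqrt (x.1 ^ 2 + x.2 ^ 2) < r ∧ 0 < x.1} := fun q hq =>
    (polar_mem_halfDisk_iff hq.1.1 ⟨by linarith [hq.2.1], by linarith [hq.2.2]⟩).2 ⟨hq.1.2, hq.2⟩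
  refine hmaps.closure (by fun_prop) ?_
  rwa [closure_prod_eq, closure_Ioo hr.ne, closure_Ioo (by linarith)]

/-- Integration over the half-disk in polar coordinates, angle outermost. -/
lemma integral_halfDisk_eq_polar {r : ℝ} (hr : 0 < r) {G : ℝ × ℝ → ℝ}
    (hG : ContinuousOn G (closure {x : ℝ × ℝ | Real.sqrt (x.1 ^ 2 + x.2 ^ 2) < r ∧ 0 < x.1})) :
    ∫ x in {x : ℝ × ℝ | Real.sqrt (x.1 ^ 2 + x.2 ^ 2) < r ∧ 0 < x.1}, G x =
      ∫ t in (-(Real.pi / 2))..(Real.pi / 2), ∫ ρ in (0 : ℝ)..r,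
        ρ * G (ρ * Real.cos t, ρ * Real.sin t) := by
  have hpi := Real.pi_pos
  set D := {x : ℝ × ℝ | Real.sqrt (x.1 ^ 2 + x.2 ^ 2) < r ∧ 0 < x.1}
  have hDm : MeasurableSet D := measurableSet_halfDisk r
  set R : Set (ℝ × ℝ) := Ioo 0 r ×ˢ Ioo (-(Real.pi / 2)) (Real.pi / 2) with hR
  have hRm : MeasurableSet R := measurableSet_Ioo.prod measurableSet_Ioo
  set H : ℝ × ℝ → ℝ := fun p => p.1 * G (p.1 * Real.cos p.2, p.1 * Real.sin p.2) with hH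
  have hint : IntegrableOn H R := by
    have hc : ContinuousOn H (Icc 0 r ×ˢ Icc (-(Real.pi / 2)) (Real.pi / 2)) :=
      continuous_fst.continuousOn.mul
        (hG.comp (by fun_prop) fun p hp => polar_mem_closure_halfDisk hr hp)
    exact (hc.integrableOn_compact (isCompact_Icc.prod isCompact_Icc)).mono_set
      (prod_mono Ioo_subset_Icc_self Ioo_subset_Icc_self)
  have hsub : R ⊆ polarCoord.target := fun p hp =>
    ⟨hp.1.1, by linarith [hp.2.1], by linarith [hp.2.2]⟩
  calc ∫ x in D, G x = ∫ x, D.indicator G x := (integral_indicator hDm).symm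
    _ = ∫ p in polarCoord.target, p.1 • D.indicator G (polarCoord.symm p) :=
        (integral_comp_polarCoord_symm _).symm
    _ = ∫ p in polarCoord.target, R.indicator H p := by
        refine setIntegral_congr_fun polarCoord.open_target.measurableSet fun p hp => ?_
        have hiff := polar_mem_halfDisk_iff (r := r) (mem_Ioi.1 hp.1) hp.2
        have hpR : p ∈ R ↔ (p.1 < r ∧ p.2 ∈ Ioo (-(Real.pi / 2)) (Real.pi / 2)) :=
          ⟨fun h => ⟨h.1.2, h.2⟩, fun h => ⟨⟨hp.1, h.1⟩, h.2⟩⟩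
        simp only [polarCoord_symm_apply, smul_eq_mul]
        by_cases h : p ∈ R
        · rw [indicator_of_mem h, indicator_of_mem (hiff.2 (hpR.1 h))]
        · rw [indicator_of_notMem h, indicator_of_notMem fun h' => h (hpR.2 (hiff.1 h')),
            mul_zero]
    _ = ∫ p in R, H p := by
        rw [setIntegral_indicator hRm, inter_eq_self_of_subset_right hsub]
    _ = ∫ t in Ioo (-(Real.pi / 2)) (Real.pi / 2), ∫ ρ in Ioo 0 r, H (ρ, t) := by
        rw [IntegrableOn, hR, Measure.volume_eq_prod, ← Measure.prod_restrict] at hint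
        rw [hR, Measure.volume_eq_prod, ← Measure.prod_restrict]
        exact integral_prod_symm _ hint
    _ = _ := by
        simp only [intervalIntegral.integral_of_le hr.le, integral_Ioc_eq_integral_Ioo,
          intervalIntegral.integral_of_le (show -(Real.pi / 2) ≤ Real.pi / 2 by linarith), hH]

/-- The closure of the half-disk is compact. -/
lemma isCompact_closure_halfDisk (r : ℝ) :
    IsCompact (closure {x : ℝ × ℝ | Real.sqrt (x.1 ^ 2 + x.2 ^ 2) < r ∧ 0 < x.1}) := by
  refine Bornology.IsBounded.isCompact_closure
    ((isCompact_Icc (a := (-r, -r)) (b := (r, r))).isBounded.subset fun x hx => ?_)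
  have h₁ := (Real.abs_le_sqrt (show x.1 ^ 2 ≤ x.1 ^ 2 + x.2 ^ 2 by nlinarith)).trans hx.1.le
  have h₂ := (Real.abs_le_sqrt (show x.2 ^ 2 ≤ x.1 ^ 2 + x.2 ^ 2 by nlinarith)).trans hx.1.le
  exact ⟨⟨(abs_le.1 h₁).1, (abs_le.1 h₂).1⟩, ⟨(abs_le.1 h₁).2, (abs_le.1 h₂).2⟩⟩

lemma continuousOn_radial_divergence {U : Set (ℝ × ℝ)} (hU : IsOpen U) {u : ℝ × ℝ → ℂ}
    (hu : ContDiffOn ℝ 1 u U) :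
    ContinuousOn (fun x => 2 * ‖u x‖ ^ 2 + 2 * inner ℝ (u x) (fderiv ℝ u x x)) U :=
  (continuousOn_const.mul (hu.continuousOn.norm.pow 2)).add
    (continuousOn_const.mul (hu.continuousOn.inner
      ((hu.continuousOn_fderiv_of_isOpen hU le_rfl).clm_apply continuousOn_id)))

/-- Divergence theorem on the half-disk for the vector field `x ↦ ‖u x‖² x`, whose flux through
the flat part of the boundary vanishes. -/
lemma integral_halfDisk_radial_divergence {r : ℝ} (hr : 0 < r) {U : Set (ℝ × ℝ)} (hU : IsOpen U)
    (hUD : closure {x : ℝ × ℝ | Real.sqrt (x.1 ^ 2 + x.2 ^ 2) < r ∧ 0 < x.1} ⊆ U)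
    {u : ℝ × ℝ → ℂ} (hu : ContDiffOn ℝ 1 u U) :
    ∫ x in {x : ℝ × ℝ | Real.sqrt (x.1 ^ 2 + x.2 ^ 2) < r ∧ 0 < x.1},
        (2 * ‖u x‖ ^ 2 + 2 * inner ℝ (u x) (fderiv ℝ u x x)) =
      r * ∫ t in (-(Real.pi / 2))..(Real.pi / 2),
        ‖u (r * Real.cos t, r * Real.sin t)‖ ^ 2 * r := by
  have hpi := Real.pi_pos
  have hG := continuousOn_radial_divergence hU hu
  rw [integral_halfDisk_eq_polar hr (hG.mono hUD), ← intervalIntegral.integral_const_mul]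
  refine intervalIntegral.integral_congr fun t ht => ?_
  rw [uIcc_of_le (by linarith)] at ht
  have hmem : ∀ ρ ∈ Icc 0 r, (ρ * Real.cos t, ρ * Real.sin t) ∈ U := fun ρ hρ =>
    hUD (polar_mem_closure_halfDisk hr (p := (ρ, t)) ⟨hρ, ht⟩)
  have hderiv : ∀ ρ ∈ uIcc 0 r, HasDerivAt
      (fun s => s ^ 2 * ‖u (s * Real.cos t, s * Real.sin t)‖ ^ 2)
      (ρ * (2 * ‖u (ρ * Real.cos t, ρ * Real.sin t)‖ ^ 2 +
        2 * inner ℝ (u (ρ * Real.cos t, ρ * Real.sin t))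
          (fderiv ℝ u (ρ * Real.cos t, ρ * Real.sin t) (ρ * Real.cos t, ρ * Real.sin t)))) ρ := by
    intro ρ hρ
    rw [uIcc_of_le hr.le] at hρ
    have hd : HasFDerivAt u (fderiv ℝ u (ρ * Real.cos t, ρ * Real.sin t))
        (ρ * Real.cos t, ρ * Real.sin t) :=
      ((hu.differentiableOn one_ne_zero).differentiableAt
        (hU.mem_nhds (hmem ρ hρ))).hasFDerivAt
    have hray : HasDerivAt (fun s : ℝ => (s * Real.cos t, s * Real.sin t))
        (Real.cos t, Real.sin t) ρ := by
      simpa using ((hasDerivAt_id ρ).mul_const (Real.cos t)).prodMk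
        ((hasDerivAt_id ρ).mul_const (Real.sin t))
    have hcomp := (hd.comp_hasDerivAt ρ hray).norm_sq
    refine ((hasDerivAt_pow 2 ρ).mul hcomp).congr_deriv ?_
    have hscale : inner ℝ (u (ρ * Real.cos t, ρ * Real.sin t))
        (fderiv ℝ u (ρ * Real.cos t, ρ * Real.sin t) (ρ * Real.cos t, ρ * Real.sin t)) =
        ρ * inner ℝ (u (ρ * Real.cos t, ρ * Real.sin t))
        (fderiv ℝ u (ρ * Real.cos t, ρ * Real.sin t) (Real.cos t, Real.sin t)) := by
      rw [← real_inner_smul_right, ← map_smul]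
      rfl
    rw [hscale]
    simp only [Function.comp_apply]
    push_cast
    ring
  have hcont : ContinuousOn (fun ρ => ρ * (2 * ‖u (ρ * Real.cos t, ρ * Real.sin t)‖ ^ 2 +
        2 * inner ℝ (u (ρ * Real.cos t, ρ * Real.sin t))
          (fderiv ℝ u (ρ * Real.cos t, ρ * Real.sin t) (ρ * Real.cos t, ρ * Real.sin t))))
      (uIcc 0 r) := by
    rw [uIcc_of_le hr.le]
    exact continuousOn_id.mul (hG.comp (f := fun ρ : ℝ => (ρ * Real.cos t, ρ * Real.sin t))
      (by fun_prop) hmem)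
  rw [intervalIntegral.integral_eq_sub_of_hasDerivAt hderiv hcont.intervalIntegrable]
  ring

/-- The Aharonov–Bohm energy density of a function vanishing near the pole is continuous. -/
lemma continuousOn_magnetic_energy {a : ℝ × ℝ} {U : Set (ℝ × ℝ)} (hU : IsOpen U)
    {u : ℝ × ℝ → ℂ} (hu : ContDiffOn ℝ 1 u U) (hvan : u =ᶠ[𝓝 a] 0) :
    ContinuousOn (fun x : ℝ × ℝ =>
      ‖Complex.I * fderiv ℝ u x (1, 0)
          + ((-(x.2 - a.2) / (2 * ((x.1 - a.1) ^ 2 + (x.2 - a.2) ^ 2)) : ℝ) : ℂ) * u x‖ ^ 2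
        + ‖Complex.I * fderiv ℝ u x (0, 1)
          + (((x.1 - a.1) / (2 * ((x.1 - a.1) ^ 2 + (x.2 - a.2) ^ 2)) : ℝ) : ℂ) * u x‖ ^ 2)
      U := by
  intro x hx
  apply ContinuousAt.continuousWithinAt
  by_cases hxa : x = a
  · subst hxa
    refine (continuousAt_const (y := (0 : ℝ))).congr ?_
    filter_upwards [hvan, hvan.fderiv (𝕜 := ℝ)] with y hy hy'
    simp [hy, hy']
  · have hu' : ContinuousAt u x := hu.continuousOn.continuousAt (hU.mem_nhds hx)
    have hfd : ContinuousAt (fderiv ℝ u) x :=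
      (hu.continuousOn_fderiv_of_isOpen hU le_rfl).continuousAt (hU.mem_nhds hx)
    have hne : 2 * ((x.1 - a.1) ^ 2 + (x.2 - a.2) ^ 2) ≠ 0 := by
      intro h
      refine hxa (Prod.ext ?_ ?_) <;> nlinarith [sq_nonneg (x.1 - a.1), sq_nonneg (x.2 - a.2)]
    have hA : ContinuousAt (fun x : ℝ × ℝ =>
        ((-(x.2 - a.2) / (2 * ((x.1 - a.1) ^ 2 + (x.2 - a.2) ^ 2)) : ℝ) : ℂ)) x :=
      Complex.continuous_ofReal.continuousAt.comp
        (ContinuousAt.div (by fun_prop) (by fun_prop) hne)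
    have hB : ContinuousAt (fun x : ℝ × ℝ =>
        (((x.1 - a.1) / (2 * ((x.1 - a.1) ^ 2 + (x.2 - a.2) ^ 2)) : ℝ) : ℂ)) x :=
      Complex.continuous_ofReal.continuousAt.comp
        (ContinuousAt.div (by fun_prop) (by fun_prop) hne)
    exact (((continuousAt_const.mul (hfd.clm_apply continuousAt_const)).add
      (hA.mul hu')).norm.pow 2).add
      (((continuousAt_const.mul (hfd.clm_apply continuousAt_const)).add (hB.mul hu')).norm.pow 2)


/-- Poincaré-type inequality on the half-disk `D_r^+` for the Aharonov–Bohm operator: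
`(1/r²)∫_{D_r^+}|u|² ≤ (1/r)∫_{S_r^+}|u|² ds + ∫_{D_r^+}|(i∇+A_a)u|²`, for `u` smooth near
the closure of `D_r^+`, vanishing near the pole `a ∈ D_r^+` and on `{x₁ = 0}`. -/
theorem poincare_halfdisk (r : ℝ) (hr : 0 < r) (a : ℝ × ℝ)
    (ha : Real.sqrt (a.1 ^ 2 + a.2 ^ 2) < r ∧ 0 < a.1)
    (U : Set (ℝ × ℝ)) (hU : IsOpen U)
    (hUD : closure {x : ℝ × ℝ | Real.sqrt (x.1 ^ 2 + x.2 ^ 2) < r ∧ 0 < x.1} ⊆ U)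
    (u : ℝ × ℝ → ℂ) (hu : ContDiffOn ℝ (⊤ : ℕ∞) u U)
    (hvan : ∃ ε : ℝ, 0 < ε ∧ ∀ x : ℝ × ℝ,
      Real.sqrt ((x.1 - a.1) ^ 2 + (x.2 - a.2) ^ 2) < ε → u x = 0)
    (hbdry : ∀ x₂ : ℝ, u (0, x₂) = 0) :
    (1 / r ^ 2) * (∫ x in {x : ℝ × ℝ | Real.sqrt (x.1 ^ 2 + x.2 ^ 2) < r ∧ 0 < x.1}, ‖u x‖ ^ 2)
      ≤ (1 / r) * (∫ t in (-(Real.pi / 2))..(Real.pi / 2),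
            ‖u (r * Real.cos t, r * Real.sin t)‖ ^ 2 * r)
        + ∫ x in {x : ℝ × ℝ | Real.sqrt (x.1 ^ 2 + x.2 ^ 2) < r ∧ 0 < x.1},
            (‖Complex.I * fderiv ℝ u x (1, 0)
                + ((-(x.2 - a.2) / (2 * ((x.1 - a.1) ^ 2 + (x.2 - a.2) ^ 2)) : ℝ) : ℂ) * u x‖ ^ 2
              + ‖Complex.I * fderiv ℝ u x (0, 1)
                + (((x.1 - a.1) / (2 * ((x.1 - a.1) ^ 2 + (x.2 - a.2) ^ 2)) : ℝ) : ℂ) * u x‖ ^ 2) := by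
  have hu₁ : ContDiffOn ℝ 1 u U := hu.of_le (by exact_mod_cast le_top)
  have hvan' : u =ᶠ[𝓝 a] 0 := by
    obtain ⟨ε, hε, h⟩ := hvan
    have hcont : Continuous fun x : ℝ × ℝ =>
        Real.sqrt ((x.1 - a.1) ^ 2 + (x.2 - a.2) ^ 2) := by fun_prop
    filter_upwards [hcont.continuousAt.eventually_lt (continuousAt_const (y := ε))
      (by simpa using hε)] with x hx using h x hx
  have hdiv := integral_halfDisk_radial_divergence hr hU hUD hu₁
  have hE := continuousOn_magnetic_energy hU hu₁ hvan'
  have hG := continuousOn_radial_divergence hU hu₁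
  have hint : ∀ {F : ℝ × ℝ → ℝ}, ContinuousOn F U →
      IntegrableOn F {x : ℝ × ℝ | Real.sqrt (x.1 ^ 2 + x.2 ^ 2) < r ∧ 0 < x.1} := fun hF =>
    ((hF.mono hUD).integrableOn_compact (isCompact_closure_halfDisk r)).mono_set subset_closure
  have hDm : MeasurableSet {x : ℝ × ℝ | Real.sqrt (x.1 ^ 2 + x.2 ^ 2) < r ∧ 0 < x.1} := measurableSet_halfDisk r
  have hmono := setIntegral_mono_on (hint (hu₁.continuousOn.norm.pow 2))
    ((hint hG).add ((hint hE).const_mul (r ^ 2))) hDm fun x hx => by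
      have hx2 : x.1 ^ 2 + x.2 ^ 2 ≤ r ^ 2 := (Real.sqrt_le_left hr.le).1 hx.1.le
      have hlin : fderiv ℝ u x x
          = (x.1 : ℂ) * fderiv ℝ u x (1, 0) + (x.2 : ℂ) * fderiv ℝ u x (0, 1) := by
        rw [← Complex.real_smul, ← Complex.real_smul, ← map_smul, ← map_smul, ← map_add]
        simp
      simp only [Pi.add_apply, hlin]
      exact norm_sq_le_radial_add_magnetic _ _ _ _ _ _ _ _ hx2
  rw [integral_add' (hint hG) ((hint hE).const_mul (r ^ 2)), integral_const_mul, hdiv] at hmono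
  refine (mul_le_mul_of_nonneg_left hmono (by positivity : 0 ≤ 1 / r ^ 2)).trans_eq ?_
  field_simp
end

section
/- Let r > 0 and a ∈ D_r^+ = {x = (x₁,x₂) : |x| < r, x₁ > 0}. Then for every complex-valued function u which is smooth on an open neighborhood of the closure of D_r^+, vanishes on a neighborhood of a, and vanishes at every point with x₁ = 0, the inequality (1/r) ∫_{S_r^+} |u|² ds ≤ ∫_{D_r^+} |i∇u + A_a u|² dx holds, where S_r^+ = {x : |x| = r, x₁ ≥ 0} is the half-circle of radius r and ds denotes arclength measure. -/
open MeasureTheory Set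

/-- Cauchy–Schwarz on an interval: `(∫ k)² ≤ R ∫ k²`, for continuous `k`. -/
theorem sq_intervalIntegral_le_mul {R : ℝ} (hR : 0 < R) {k : ℝ → ℝ}
    (hk : ContinuousOn k (Icc 0 R)) :
    (∫ s in (0 : ℝ)..R, k s) ^ 2 ≤ R * ∫ s in (0 : ℝ)..R, k s ^ 2 := by
  set M := ∫ s in (0 : ℝ)..R, k s with hM
  have hk' : ContinuousOn k (uIcc 0 R) := by rwa [uIcc_of_le hR.le]
  have hint := hk'.intervalIntegrable (μ := volume)
  have hint2 : IntervalIntegrable (fun s => k s ^ 2) volume 0 R :=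
    (hk'.pow 2).intervalIntegrable
  have h := intervalIntegral.integral_mono_on hR.le
    ((hint.const_mul (2 * (M / R))).sub (intervalIntegrable_const (c := (M / R) ^ 2))) hint2
    (fun s _ => by nlinarith [sq_nonneg (k s - M / R)])
  rw [intervalIntegral.integral_sub (hint.const_mul _) intervalIntegrable_const,
    intervalIntegral.integral_const_mul, intervalIntegral.integral_const, ← hM] at h
  have h' := mul_le_mul_of_nonneg_left h hR.le
  have e : R * (2 * (M / R) * M - (R - 0) • (M / R) ^ 2) = M ^ 2 := by
    simp only [smul_eq_mul]
    field_simp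
    ring
  rwa [e] at h'

/-- One-dimensional magnetic trace inequality, obtained by gauging away the potential. -/
theorem norm_sq_le_mul_integral_magnetic {R : ℝ} (hR : 0 < R) {h h' : ℝ → ℂ} {A : ℝ → ℝ}
    (hA : Continuous A) (hderiv : ∀ s ∈ Icc 0 R, HasDerivAt h (h' s) s)
    (hcont : ContinuousOn h' (Icc 0 R)) (h0 : h 0 = 0) :
    ‖h R‖ ^ 2 ≤ R * ∫ s in (0 : ℝ)..R, ‖Complex.I * h' s + (A s : ℂ) * h s‖ ^ 2 := by
  have hh : ContinuousOn h (Icc 0 R) := fun s hs => (hderiv s hs).continuousAt.continuousWithinAt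
  have hAc : Continuous fun s => (A s : ℂ) := Complex.continuous_ofReal.comp hA
  set θ : ℝ → ℝ := fun s => ∫ t in (0 : ℝ)..s, A t with hθ
  have hθd : ∀ s, HasDerivAt θ (A s) s := fun s =>
    intervalIntegral.integral_hasDerivAt_right (hA.intervalIntegrable _ _)
      (hA.stronglyMeasurableAtFilter _ _) hA.continuousAt
  have hθc : Continuous θ := continuous_iff_continuousAt.2 fun s => (hθd s).continuousAt
  set E : ℝ → ℂ := fun s => Complex.exp ((-θ s : ℝ) * Complex.I) with hE
  have hEc : Continuous E := by fun_prop
  have hEn : ∀ s, ‖E s‖ = 1 := fun s => Complex.norm_exp_ofReal_mul_I _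
  have hEd : ∀ s, HasDerivAt E (E s * ((-A s : ℝ) * Complex.I)) s := fun s =>
    ((hθd s).neg.ofReal_comp.mul_const Complex.I).cexp
  have hw : ∀ s ∈ uIcc 0 R, HasDerivAt (fun s => E s * h s)
      (E s * ((-A s : ℝ) * Complex.I) * h s + E s * h' s) s := by
    intro s hs
    rw [uIcc_of_le hR.le] at hs
    exact (hEd s).mul (hderiv s hs)
  have hwc : ContinuousOn
      (fun s => E s * ((-A s : ℝ) * Complex.I) * h s + E s * h' s) (uIcc 0 R) := by
    rw [uIcc_of_le hR.le]
    push_cast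
    exact (((hEc.mul (hAc.neg.mul continuous_const)).continuousOn).mul hh).add
      (hEc.continuousOn.mul hcont)
  have hftc := intervalIntegral.integral_eq_sub_of_hasDerivAt hw hwc.intervalIntegrable
  have hnorm : ∀ s, ‖E s * ((-A s : ℝ) * Complex.I) * h s + E s * h' s‖
      = ‖Complex.I * h' s + (A s : ℂ) * h s‖ := by
    intro s
    have : Complex.I * h' s + (A s : ℂ) * h s
        = Complex.I * ((-A s : ℝ) * Complex.I * h s + h' s) := by
      push_cast
      linear_combination (A s : ℂ) * h s * Complex.I_mul_I
    rw [this, mul_assoc, ← mul_add, norm_mul, norm_mul, hEn, Complex.norm_I]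
  have hle := intervalIntegral.norm_integral_le_integral_norm (μ := volume)
    (f := fun s => E s * ((-A s : ℝ) * Complex.I) * h s + E s * h' s) hR.le
  rw [hftc, h0, mul_zero, sub_zero, norm_mul, hEn, one_mul] at hle
  simp only [hnorm] at hle
  refine (pow_le_pow_left₀ (norm_nonneg _) hle 2).trans (sq_intervalIntegral_le_mul hR ?_)
  exact ((continuousOn_const.mul hcont).add (hAc.continuousOn.mul hh)).norm

/-- The open half-disk of radius `r` in `{x₁ > 0}`. -/
def halfDisk (r : ℝ) : Set (ℝ × ℝ) := {x | Real.sqrt (x.1 ^ 2 + x.2 ^ 2) < r ∧ 0 < x.1}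

theorem mem_halfDisk_iff {r : ℝ} (hr : 0 < r) (x y : ℝ) :
    (x, y) ∈ halfDisk r ↔ x ∈ Ioo 0 (Real.sqrt (r ^ 2 - y ^ 2)) := by
  simp only [halfDisk, mem_ofPred_eq, mem_Ioo]
  rw [Real.sqrt_lt' hr, and_comm]
  refine and_congr_right fun hx => ?_
  rw [Real.lt_sqrt hx.le, lt_sub_iff_add_lt]

theorem isOpen_halfDisk (r : ℝ) : IsOpen (halfDisk r) :=
  (isOpen_lt (f := fun x : ℝ × ℝ => Real.sqrt (x.1 ^ 2 + x.2 ^ 2)) (by fun_prop)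
    continuous_const).inter (isOpen_lt continuous_const continuous_fst)

theorem isCompact_closure_halfDisk_s14 (r : ℝ) : IsCompact (closure (halfDisk r)) := by
  refine ((isCompact_Icc (a := -r) (b := r)).prod
    (isCompact_Icc (a := -r) (b := r))).closure_of_subset ?_
  rintro ⟨x, y⟩ ⟨h, -⟩
  exact ⟨abs_le.1 ((Real.abs_le_sqrt (by nlinarith [sq_nonneg y])).trans h.le),
    abs_le.1 ((Real.abs_le_sqrt (by nlinarith [sq_nonneg x])).trans h.le)⟩

theorem mem_closure_halfDisk {r y s : ℝ} (hr : 0 < r) (hy : 0 < Real.sqrt (r ^ 2 - y ^ 2))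
    (hs : s ∈ Icc 0 (Real.sqrt (r ^ 2 - y ^ 2))) : (s, y) ∈ closure (halfDisk r) := by
  rw [← closure_Ioo hy.ne] at hs
  exact map_mem_closure (f := fun s : ℝ => (s, y)) (by fun_prop) hs
    fun x hx => (mem_halfDisk_iff hr x y).2 hx

/-- The half-circle in angular parametrization becomes a graph over the second coordinate. -/
theorem integral_halfCircle_eq {r : ℝ} (hr : 0 < r) (f : ℝ × ℝ → ℝ) :
    ∫ t in (-(Real.pi / 2))..(Real.pi / 2), f (r * Real.cos t, r * Real.sin t)
      = ∫ y in Ioo (-r) r, f (Real.sqrt (r ^ 2 - y ^ 2), y) / Real.sqrt (r ^ 2 - y ^ 2) := by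
  have himg : (fun t => r * Real.sin t) '' Ioo (-(Real.pi / 2)) (Real.pi / 2) = Ioo (-r) r := by
    ext y
    constructor
    · rintro ⟨t, ht, rfl⟩
      have h1 := Real.cos_pos_of_mem_Ioo ht
      have h2 := Real.sin_sq_add_cos_sq t
      have h3 : |Real.sin t| < 1 := by
        rw [← sq_lt_one_iff_abs_lt_one]
        nlinarith
      obtain ⟨h4, h5⟩ := abs_lt.1 h3
      exact ⟨by nlinarith, by nlinarith⟩
    · rintro ⟨h1, h2⟩
      have h3 : -1 < y / r := by rw [lt_div_iff₀ hr]; linarith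
      have h4 : y / r < 1 := by rw [div_lt_one hr]; exact h2
      refine ⟨Real.arcsin (y / r),
        ⟨Real.neg_pi_div_two_lt_arcsin.2 h3, Real.arcsin_lt_pi_div_two.2 h4⟩, ?_⟩
      simp only [Real.sin_arcsin h3.le h4.le]
      field_simp
  have hinj : InjOn (fun t => r * Real.sin t) (Ioo (-(Real.pi / 2)) (Real.pi / 2)) :=
    fun x hx y hy hxy => Real.injOn_sin (Ioo_subset_Icc_self hx) (Ioo_subset_Icc_self hy)
      (mul_left_cancel₀ hr.ne' hxy)
  rw [← himg, integral_image_eq_integral_abs_deriv_smul measurableSet_Ioo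
      (fun t _ => ((Real.hasDerivAt_sin t).const_mul r).hasDerivWithinAt) hinj,
    intervalIntegral.integral_of_le (by linarith [Real.pi_pos]), integral_Ioc_eq_integral_Ioo]
  refine setIntegral_congr_fun measurableSet_Ioo fun t ht => ?_
  have hpos : 0 < r * Real.cos t := mul_pos hr (Real.cos_pos_of_mem_Ioo ht)
  have hsq : Real.sqrt (r ^ 2 - (r * Real.sin t) ^ 2) = r * Real.cos t := by
    rw [Real.sqrt_eq_iff_eq_sq _ hpos.le]
    · linear_combination r ^ 2 * Real.sin_sq_add_cos_sq t * (-1)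
    · nlinarith [Real.sin_sq_add_cos_sq t, sq_nonneg (r * Real.cos t)]
  simp only [hsq, abs_of_pos hpos, smul_eq_mul]
  exact (mul_div_cancel₀ _ hpos.ne').symm

/-- If `g` is integrable on the half-disk and dominates `f / R` after integration along each
horizontal chord of length `R`, then its integral dominates that of `f` over the half-circle. -/
theorem integral_halfCircle_le {r : ℝ} (hr : 0 < r) {f g : ℝ × ℝ → ℝ} (hf : ∀ x, 0 ≤ f x)
    (hg : IntegrableOn g (halfDisk r))
    (hfg : ∀ y ∈ Ioo (-r) r, f (Real.sqrt (r ^ 2 - y ^ 2), y)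
      ≤ Real.sqrt (r ^ 2 - y ^ 2) * ∫ s in (0 : ℝ)..Real.sqrt (r ^ 2 - y ^ 2), g (s, y)) :
    ∫ t in (-(Real.pi / 2))..(Real.pi / 2), f (r * Real.cos t, r * Real.sin t)
      ≤ ∫ x in halfDisk r, g x := by
  have hmeas := (isOpen_halfDisk r).measurableSet
  rw [integral_halfCircle_eq hr, ← integral_indicator hmeas, ← integral_indicator measurableSet_Ioo]
  have hgi := (integrable_indicator_iff hmeas).2 hg
  rw [Measure.volume_eq_prod] at hgi ⊢
  rw [integral_prod_symm _ hgi]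
  have hslice : ∀ y, ∫ x, (halfDisk r).indicator g (x, y)
      = ∫ s in (0 : ℝ)..Real.sqrt (r ^ 2 - y ^ 2), g (s, y) := by
    intro y
    rw [intervalIntegral.integral_of_le (Real.sqrt_nonneg _), integral_Ioc_eq_integral_Ioo,
      ← integral_indicator measurableSet_Ioo]
    congr 1
    ext x
    simp only [indicator, mem_halfDisk_iff hr]
  refine integral_mono_of_nonneg (ae_of_all _ fun y => ?_) hgi.integral_prod_right
    (ae_of_all _ fun y => ?_)
  · exact indicator_nonneg (fun y _ => div_nonneg (hf _) (Real.sqrt_nonneg _)) y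
  · simp only [hslice]
    by_cases hy : y ∈ Ioo (-r) r
    · have hR : 0 < Real.sqrt (r ^ 2 - y ^ 2) := Real.sqrt_pos.2 (by nlinarith [hy.1, hy.2])
      rw [indicator_of_mem hy, div_le_iff₀' hR]
      exact hfg y hy
    · have hR : Real.sqrt (r ^ 2 - y ^ 2) = 0 := Real.sqrt_eq_zero_of_nonpos (by
        rw [mem_Ioo, ← abs_lt, not_lt] at hy
        nlinarith [sq_abs y])
      rw [indicator_of_notMem hy, hR, intervalIntegral.integral_same]

/-- A component of the magnetic gradient is continuous where `u` is smooth, if `u` vanishes near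
the pole of the potential. -/
theorem continuousOn_magnetic_component {U : Set (ℝ × ℝ)} (hU : IsOpen U) {u : ℝ × ℝ → ℂ}
    (hu : ContDiffOn ℝ (⊤ : ℕ∞) u U) {a : ℝ × ℝ} (hvan : ∀ᶠ x in nhds a, u x = 0)
    {p : ℝ × ℝ → ℝ} (hp : Continuous p) (v : ℝ × ℝ) :
    ContinuousOn (fun x : ℝ × ℝ => ‖Complex.I * fderiv ℝ u x v
      + ((p x / (2 * ((x.1 - a.1) ^ 2 + (x.2 - a.2) ^ 2)) : ℝ) : ℂ) * u x‖ ^ 2) U := by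
  have hfd : ContinuousOn (fun x => fderiv ℝ u x v) U :=
    (hu.continuousOn_fderiv_of_isOpen hU (by simp)).clm_apply continuousOn_const
  intro x hx
  refine ContinuousAt.continuousWithinAt ?_
  by_cases hxa : x = a
  · subst hxa
    refine (continuousAt_const (y := (0 : ℝ))).congr ?_
    filter_upwards [hvan.eventually_nhds] with z hz
    have hz0 : u =ᶠ[nhds z] fun _ => 0 := hz
    simp [hz0.fderiv_eq, hz.self_of_nhds]
  · have hne : (2 * ((x.1 - a.1) ^ 2 + (x.2 - a.2) ^ 2)) ≠ 0 := by
      intro h0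
      refine hxa (Prod.ext ?_ ?_) <;>
        nlinarith [sq_nonneg (x.1 - a.1), sq_nonneg (x.2 - a.2)]
    have h1 := hfd.continuousAt (hU.mem_nhds hx)
    have h2 := hu.continuousOn.continuousAt (hU.mem_nhds hx)
    have h3 : ContinuousAt
        (fun x : ℝ × ℝ => p x / (2 * ((x.1 - a.1) ^ 2 + (x.2 - a.2) ^ 2))) x :=
      hp.continuousAt.div (by fun_prop) hne
    exact ((continuousAt_const.mul h1).add
      ((Complex.continuous_ofReal.continuousAt.comp h3).mul h2)).norm.pow 2

/-- Poincaré-type trace inequality on the half-disk `D_r^+` for the Aharonov–Bohm operator: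
`(1/r)∫_{S_r^+}|u|² ds ≤ ∫_{D_r^+}|(i∇+A_a)u|²`, for `u` smooth near the closure of
`D_r^+`, vanishing near the pole `a ∈ D_r^+` and on `{x₁ = 0}`. -/
theorem poincare_trace_halfdisk (r : ℝ) (hr : 0 < r) (a : ℝ × ℝ)
    (ha : Real.sqrt (a.1 ^ 2 + a.2 ^ 2) < r ∧ 0 < a.1)
    (U : Set (ℝ × ℝ)) (hU : IsOpen U)
    (hUD : closure {x : ℝ × ℝ | Real.sqrt (x.1 ^ 2 + x.2 ^ 2) < r ∧ 0 < x.1} ⊆ U)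
    (u : ℝ × ℝ → ℂ) (hu : ContDiffOn ℝ (⊤ : ℕ∞) u U)
    (hvan : ∃ ε : ℝ, 0 < ε ∧ ∀ x : ℝ × ℝ,
      Real.sqrt ((x.1 - a.1) ^ 2 + (x.2 - a.2) ^ 2) < ε → u x = 0)
    (hbdry : ∀ x₂ : ℝ, u (0, x₂) = 0) :
    (1 / r) * (∫ t in (-(Real.pi / 2))..(Real.pi / 2),
          ‖u (r * Real.cos t, r * Real.sin t)‖ ^ 2 * r)
      ≤ ∫ x in {x : ℝ × ℝ | Real.sqrt (x.1 ^ 2 + x.2 ^ 2) < r ∧ 0 < x.1},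
          (‖Complex.I * fderiv ℝ u x (1, 0)
              + ((-(x.2 - a.2) / (2 * ((x.1 - a.1) ^ 2 + (x.2 - a.2) ^ 2)) : ℝ) : ℂ) * u x‖ ^ 2
            + ‖Complex.I * fderiv ℝ u x (0, 1)
              + (((x.1 - a.1) / (2 * ((x.1 - a.1) ^ 2 + (x.2 - a.2) ^ 2)) : ℝ) : ℂ) * u x‖ ^ 2) := by
  change closure (halfDisk r) ⊆ U at hUD
  change _ ≤ ∫ x in halfDisk r, _
  have hvan' : ∀ᶠ x in nhds a, u x = 0 := by
    obtain ⟨ε, hε, h⟩ := hvan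
    have : ContinuousAt (fun x : ℝ × ℝ => Real.sqrt ((x.1 - a.1) ^ 2 + (x.2 - a.2) ^ 2)) a := by
      fun_prop
    filter_upwards [this.eventually_lt_const (u := ε) (by simpa using hε)] with x hx
    exact h x hx
  have hint {p : ℝ × ℝ → ℝ} (hp : Continuous p) (v : ℝ × ℝ) :=
    (((continuousOn_magnetic_component hU hu hvan' hp v).mono hUD).integrableOn_compact
      (μ := volume) (isCompact_closure_halfDisk_s14 r)).mono_set subset_closure
  have hint₁ := hint (p := fun x => -(x.2 - a.2)) (by fun_prop) (1, 0)
  have hint₂ := hint (p := fun x => x.1 - a.1) (by fun_prop) (0, 1)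
  refine le_trans ?_ (setIntegral_mono hint₁ (hint₁.add hint₂) fun x =>
    le_add_of_nonneg_right (sq_nonneg _))
  rw [intervalIntegral.integral_mul_const, mul_comm (1 / r), mul_assoc, mul_one_div_cancel hr.ne',
    mul_one]
  refine integral_halfCircle_le (f := fun x => ‖u x‖ ^ 2) hr (fun x => sq_nonneg _) hint₁
    fun y hy => ?_
  have hR : 0 < Real.sqrt (r ^ 2 - y ^ 2) := Real.sqrt_pos.2 (by nlinarith [hy.1, hy.2])
  have hmem : ∀ s ∈ Icc 0 (Real.sqrt (r ^ 2 - y ^ 2)), (s, y) ∈ U := fun s hs =>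
    hUD (mem_closure_halfDisk hr hR hs)
  refine norm_sq_le_mul_integral_magnetic (h := fun s => u (s, y))
    (h' := fun s => fderiv ℝ u (s, y) (1, 0))
    (A := fun s => -(y - a.2) / (2 * ((s - a.1) ^ 2 + (y - a.2) ^ 2))) hR ?_ (fun s hs => ?_) ?_
    (hbdry y)
  · rcases eq_or_ne y a.2 with rfl | hya
    · simpa using continuous_const
    · refine continuous_const.div (by fun_prop) fun s => ?_
      have := sq_pos_of_ne_zero (sub_ne_zero.2 hya)
      positivity
  · have hd : HasFDerivAt u (fderiv ℝ u (s, y)) (s, y) :=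
      ((hu.differentiableOn (by simp)).differentiableAt
        (hU.mem_nhds (hmem s hs))).hasFDerivAt
    exact hd.comp_hasDerivAt s ((hasDerivAt_id s).prodMk (hasDerivAt_const s y))
  · exact ((hu.continuousOn_fderiv_of_isOpen hU (by simp)).clm_apply continuousOn_const).comp
      (by fun_prop : Continuous fun s : ℝ => (s, y)).continuousOn hmem
end
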